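/- arXiv:1810.12871 — 6 statements merged into one kernel-verified Lean document; each statement's English description precedes it below -/
import Mathlib

section
/- Let n ≥ 2, let t, W, J, θ > 0, let d ∈ ℝ^n have strictly positive entries with d_0 = θ/n, and let a ∈ [0,1]^n have transmissivity ρ = ρ(a). Set γ = t/(n(W + Jρ)), P = n(⌊nρ⌋ + (nρ − ⌊nρ⌋)²) − n²ρ², and let P_1,…,P_{n−1} be the waterfilling allocation P_i = (1/γ)·max(T − 1/d_i, 0), where T ≥ 0 is chosen so that ∑_{i=1}^{n−1} P_i = P. Then the LMMSE satisfies m(n,t,W,J,d,a) ≥ 1/(n/θ + γ n² ρ²) + ∑_{i=1}^{n−1} 1/(1/d_i + γ P_i). -/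
/-- Discrete Fourier transform of a real vector `a ∈ ℝ^n`:
`â_j = ∑_{i=0}^{n-1} a_i e^{-2πi·ij/n}`. -/
noncomputable def dft {n : ℕ} (a : Fin n → ℝ) (j : Fin n) : ℂ :=
  ∑ i : Fin n, (a i : ℂ) *
    Complex.exp (-(2 * Real.pi * Complex.I * ((i : ℕ) : ℂ) * ((j : ℕ) : ℂ)) / (n : ℂ))

/-- Transmissivity `ρ(a) = (1/n) ∑ i, a i`. -/
noncomputable def transmissivity {n : ℕ} (a : Fin n → ℝ) : ℝ :=
  (1 / (n : ℝ)) * ∑ i : Fin n, a i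

/-- LMMSE `m(n,t,W,J,d,a) = ∑_i 1/(1/d_i + γ|â_i|²)` with
`γ = t/(n(W+Jρ(a)))`. -/
noncomputable def lmmse (n : ℕ) (t W J : ℝ) (d : Fin n → ℝ) (a : Fin n → ℝ) : ℝ :=
  ∑ i : Fin n,
    1 / (1 / d i + (t / (n * (W + J * transmissivity a))) * ‖dft a i‖ ^ 2)

/-- Optimal LMMSE `m*(n,t,W,J,d)`: infimum of the LMMSE over apertures `a ∈ [0,1]^n`. -/
noncomputable def lmmseOpt (n : ℕ) (t W J : ℝ) (d : Fin n → ℝ) : ℝ :=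
  sInf {m | ∃ a : Fin n → ℝ, (∀ i, a i ∈ Set.Icc (0 : ℝ) 1) ∧ m = lmmse n t W J d a}

/-!
By Parseval, the spectral energy `∑ ‖â_j‖²` equals `n ∑ a_i²`, and among the vectors of `[0,1]^n`
with total mass `s` the sum of squares is largest when `⌊s⌋` entries are `1` and one entry carries
the remainder. Removing the zero frequency `â_0 = nρ` leaves at most `P` for the others. How a
budget `P` is best spent on them is a convex problem: with noise levels `c_i = 1 / d_i`,
waterfilling raises each `c_i` to `max T c_i`. The slope of `1 / z` there is `-1 / T²` where the
level was raised and no steeper elsewhere, so the tangent lines show that moving energy between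
frequencies cannot decrease the sum.
-/

section Waterfilling

variable {K ι : Type*} [Field K] [LinearOrder K] [IsStrictOrderedRing K]

lemma one_div_sub_le_one_div {y z : K} (hy : 0 < y) (hz : 0 < z) :
    1 / y - (z - y) / y ^ 2 ≤ 1 / z := by
  have gap : 1 / z - (1 / y - (z - y) / y ^ 2) = (z - y) ^ 2 / (z * y ^ 2) := by
    field_simp
    ring
  rw [← sub_nonneg, gap]
  positivity

lemma one_div_max_sub_le_one_div {T c z : K} (hT : 0 < T) (hc : 0 < c) (hcz : c ≤ z) :
    1 / max T c - (z - max T c) / T ^ 2 ≤ 1 / z := by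
  have hz : 0 < z := hc.trans_le hcz
  rcases le_total c T with hcT | hTc
  · rw [max_eq_left hcT]
    exact one_div_sub_le_one_div hT hz
  · rw [max_eq_right hTc]
    have slope : (z - c) / c ^ 2 ≤ (z - c) / T ^ 2 := by
      have : 0 ≤ z - c := sub_nonneg.2 hcz
      gcongr
    linarith [one_div_sub_le_one_div hc hz]

theorem sum_one_div_max_le_sum_one_div {s : Finset ι} {c z : ι → K} {T : K}
    (hc : ∀ i ∈ s, 0 < c i) (hcz : ∀ i ∈ s, c i ≤ z i)
    (hsum : ∑ i ∈ s, z i ≤ ∑ i ∈ s, max T (c i)) :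
    ∑ i ∈ s, 1 / max T (c i) ≤ ∑ i ∈ s, 1 / z i := by
  rcases le_or_gt T 0 with hT | hT
  · have hmax : ∀ i ∈ s, max T (c i) = c i := fun i hi ↦ max_eq_right (hT.trans (hc i hi).le)
    rw [Finset.sum_congr rfl hmax] at hsum
    have heq : ∀ i ∈ s, c i = z i :=
      (Finset.sum_eq_sum_iff_of_le hcz).1 ((Finset.sum_le_sum hcz).antisymm hsum)
    exact Finset.sum_le_sum fun i hi ↦ by rw [hmax i hi, heq i hi]
  · have excess : (∑ i ∈ s, z i - ∑ i ∈ s, max T (c i)) / T ^ 2 ≤ 0 :=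
      div_nonpos_of_nonpos_of_nonneg (sub_nonpos.2 hsum) (sq_nonneg T)
    calc ∑ i ∈ s, 1 / max T (c i)
        ≤ ∑ i ∈ s, 1 / max T (c i) - (∑ i ∈ s, z i - ∑ i ∈ s, max T (c i)) / T ^ 2 := by linarith
      _ = ∑ i ∈ s, (1 / max T (c i) - (z i - max T (c i)) / T ^ 2) := by
        rw [Finset.sum_sub_distrib, ← Finset.sum_div, Finset.sum_sub_distrib]
      _ ≤ ∑ i ∈ s, 1 / z i :=
        Finset.sum_le_sum fun i hi ↦ one_div_max_sub_le_one_div hT (hc i hi) (hcz i hi)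

end Waterfilling

section SumOfSquares

variable {K ι : Type*} [Field K] [LinearOrder K] [IsStrictOrderedRing K] [FloorRing K]

lemma floor_add_fract_sq_add_sq_le (s : K) {x : K} (hx : x ∈ Set.Icc 0 1) :
    ⌊s⌋ + Int.fract s ^ 2 + x ^ 2 ≤ ⌊s + x⌋ + Int.fract (s + x) ^ 2 := by
  obtain ⟨hx0, hx1⟩ := hx
  have hf0 : 0 ≤ Int.fract s := Int.fract_nonneg s
  have hf1 : Int.fract s < 1 := Int.fract_lt_one s
  have hs : ⌊s⌋ + Int.fract s = s := Int.floor_add_fract s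
  rcases lt_or_ge (Int.fract s + x) 1 with hlt | hge
  · have hfloor : ⌊s + x⌋ = ⌊s⌋ := by
      rw [Int.floor_eq_iff]
      constructor <;> linarith
    have hfract : Int.fract (s + x) = Int.fract s + x := by
      rw [← Int.self_sub_floor, hfloor]
      linarith
    rw [hfloor, hfract]
    nlinarith [mul_nonneg hf0 hx0]
  · have hfloor : ⌊s + x⌋ = ⌊s⌋ + 1 := by
      rw [Int.floor_eq_iff]
      push_cast
      constructor <;> linarith
    have hfract : Int.fract (s + x) = Int.fract s + x - 1 := by
      rw [← Int.self_sub_floor, hfloor]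
      push_cast
      linarith
    rw [hfloor, hfract]
    push_cast
    nlinarith [mul_nonneg (sub_nonneg.2 hf1.le) (sub_nonneg.2 hx1)]

theorem sum_sq_le_floor_sum_add_fract_sum_sq (s : Finset ι) {a : ι → K}
    (ha : ∀ i ∈ s, a i ∈ Set.Icc 0 1) :
    ∑ i ∈ s, a i ^ 2 ≤ ⌊∑ i ∈ s, a i⌋ + Int.fract (∑ i ∈ s, a i) ^ 2 := by
  induction s using Finset.cons_induction with
  | empty => simp
  | cons i s hi ih =>
    rw [Finset.forall_mem_cons] at ha
    rw [Finset.sum_cons, Finset.sum_cons, add_comm (a i), add_comm (a i ^ 2)]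
    linarith [ih ha.2, floor_add_fract_sq_add_sq_le (∑ j ∈ s, a j) ha.1]

end SumOfSquares

section Parseval

variable {N : ℕ} [NeZero N] {E : Type*} [NormedAddCommGroup E] [InnerProductSpace ℂ E]

theorem zmod_sum_inner_dft_dft (Φ Ψ : ZMod N → E) :
    ∑ k, inner ℂ (ZMod.dft Φ k) (ZMod.dft Ψ k) = N * ∑ j, inner ℂ (Φ j) (Ψ j) := by
  have adjoint : ∀ j k : ZMod N, inner ℂ (ZMod.stdAddChar (-(j * k)) • Φ j) (ZMod.dft Ψ k) =
      inner ℂ (Φ j) (ZMod.stdAddChar (-(k * -j)) • ZMod.dft Ψ k) := fun j k ↦ by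
    rw [inner_smul_left, inner_smul_right, ← AddChar.map_neg_eq_conj, neg_neg, mul_neg, neg_neg,
      mul_comm j k]
  calc ∑ k, inner ℂ (ZMod.dft Φ k) (ZMod.dft Ψ k)
      = ∑ k, ∑ j, inner ℂ (Φ j) (ZMod.stdAddChar (-(k * -j)) • ZMod.dft Ψ k) := by
        simp only [ZMod.dft_apply Φ, sum_inner, adjoint]
    _ = ∑ j, inner ℂ (Φ j) (ZMod.dft (ZMod.dft Ψ) (-j)) := by
        rw [Finset.sum_comm]
        simp only [ZMod.dft_apply (ZMod.dft Ψ), inner_sum]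
    _ = N * ∑ j, inner ℂ (Φ j) (Ψ j) := by
        simp only [ZMod.dft_dft, neg_neg, inner_smul_right, Finset.mul_sum]

theorem zmod_sum_norm_dft_sq (Φ : ZMod N → E) :
    ∑ k, ‖ZMod.dft Φ k‖ ^ 2 = N * ∑ j, ‖Φ j‖ ^ 2 := by
  have h := zmod_sum_inner_dft_dft Φ Φ
  simp only [inner_self_eq_norm_sq_to_K, Complex.coe_algebraMap] at h
  exact_mod_cast h

end Parseval

section Aperture

variable {n : ℕ}

lemma zmod_finEquiv_eq_natCast_val [NeZero n] (i : Fin n) : ZMod.finEquiv n i = (i : ℕ) := by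
  obtain ⟨m, rfl⟩ := Nat.exists_eq_succ_of_ne_zero (NeZero.ne n)
  exact (Fin.cast_val_eq_self i).symm

lemma dft_eq_zmod_dft [NeZero n] (a : Fin n → ℝ) (j : Fin n) :
    dft a j = ZMod.dft (fun k ↦ (a ((ZMod.finEquiv n).symm k) : ℂ)) (ZMod.finEquiv n j) := by
  rw [ZMod.dft_apply, ← (ZMod.finEquiv n).toEquiv.sum_comp, dft]
  refine Finset.sum_congr rfl fun i _ ↦ ?_
  have phase : ZMod.stdAddChar (-(ZMod.finEquiv n i * ZMod.finEquiv n j)) =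
      Complex.exp (-(2 * Real.pi * Complex.I * (i : ℕ) * (j : ℕ)) / n) := by
    rw [zmod_finEquiv_eq_natCast_val, zmod_finEquiv_eq_natCast_val]
    convert ZMod.stdAddChar_coe (N := n) (-(i * j)) using 2 <;> push_cast <;> ring
  simp [phase, mul_comm (a i : ℂ)]

theorem sum_norm_dft_sq (a : Fin n → ℝ) : ∑ j, ‖dft a j‖ ^ 2 = n * ∑ i, a i ^ 2 := by
  rcases eq_zero_or_neZero n with rfl | _
  · simp
  let Φ : ZMod n → ℂ := fun k ↦ a ((ZMod.finEquiv n).symm k)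
  calc ∑ j, ‖dft a j‖ ^ 2
      = ∑ j, ‖ZMod.dft Φ (ZMod.finEquiv n j)‖ ^ 2 := by simp only [dft_eq_zmod_dft, Φ]
    _ = ∑ k, ‖ZMod.dft Φ k‖ ^ 2 :=
        (ZMod.finEquiv n).toEquiv.sum_comp fun k ↦ ‖ZMod.dft Φ k‖ ^ 2
    _ = n * ∑ k, ‖Φ k‖ ^ 2 := zmod_sum_norm_dft_sq Φ
    _ = n * ∑ i, a i ^ 2 := by
        rw [← (ZMod.finEquiv n).toEquiv.sum_comp]
        simp [Φ]

lemma card_mul_transmissivity (a : Fin n → ℝ) : n * transmissivity a = ∑ i, a i := by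
  rcases eq_zero_or_neZero n with rfl | _
  · simp
  rw [transmissivity, ← mul_assoc, mul_one_div_cancel (NeZero.ne _), one_mul]

lemma transmissivity_nonneg {a : Fin n → ℝ} (ha : ∀ i, 0 ≤ a i) : 0 ≤ transmissivity a :=
  mul_nonneg (by positivity) (Finset.sum_nonneg fun i _ ↦ ha i)

lemma norm_dft_zero_sq [NeZero n] (a : Fin n → ℝ) :
    ‖dft a 0‖ ^ 2 = n ^ 2 * transmissivity a ^ 2 := by
  have h : dft a 0 = (n * transmissivity a : ℝ) := by
    rw [card_mul_transmissivity]
    simp [dft]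
  rw [h, Complex.norm_real, Real.norm_eq_abs, sq_abs, mul_pow]

theorem sum_norm_dft_sq_erase_zero_le [NeZero n] {a : Fin n → ℝ} (ha : ∀ i, a i ∈ Set.Icc 0 1) :
    ∑ j ∈ Finset.univ.erase 0, ‖dft a j‖ ^ 2 ≤
      n * (⌊n * transmissivity a⌋ + Int.fract (n * transmissivity a) ^ 2) -
        n ^ 2 * transmissivity a ^ 2 := by
  rw [Finset.sum_erase_eq_sub (Finset.mem_univ 0), sum_norm_dft_sq, norm_dft_zero_sq,
    card_mul_transmissivity]
  gcongr
  exact sum_sq_le_floor_sum_add_fract_sum_sq Finset.univ fun i _ ↦ ha i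

end Aperture

/-- Prop. 1 (waterfilling lower bound on the LMMSE). -/
theorem lmmse_waterfilling_lower_bound
    (n : ℕ) (hn : 2 ≤ n) (t W J θ T : ℝ)
    (ht : 0 < t) (hW : 0 < W) (hJ : 0 < J) (hθ : 0 < θ) (hT : 0 ≤ T)
    (d a : Fin n → ℝ) (hd : ∀ i, 0 < d i)
    (hd0 : d ⟨0, by omega⟩ = θ / n)
    (ha : ∀ i, a i ∈ Set.Icc (0 : ℝ) 1)
    (ρ γ P : ℝ) (hρ : ρ = transmissivity a)
    (hγ : γ = t / (n * (W + J * ρ)))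
    (hP : P = (n : ℝ) * ((⌊(n : ℝ) * ρ⌋ : ℝ) + ((n : ℝ) * ρ - (⌊(n : ℝ) * ρ⌋ : ℝ)) ^ 2)
            - (n : ℝ) ^ 2 * ρ ^ 2)
    (Pw : Fin n → ℝ) (hPw : ∀ i, Pw i = (1 / γ) * max (T - 1 / d i) 0)
    (hsum : ∑ i ∈ Finset.univ.erase (⟨0, by omega⟩ : Fin n), Pw i = P) :
    1 / ((n : ℝ) / θ + γ * (n : ℝ) ^ 2 * ρ ^ 2) +
        ∑ i ∈ Finset.univ.erase (⟨0, by omega⟩ : Fin n), 1 / (1 / d i + γ * Pw i)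
      ≤ lmmse n t W J d a := by
  have : NeZero n := ⟨by omega⟩
  rw [Fin.mk_zero'] at hd0 hsum ⊢
  have hγ0 : 0 < γ := by
    have : 0 ≤ ρ := hρ ▸ transmissivity_nonneg fun i ↦ (ha i).1
    have : (0 : ℝ) < n := Nat.cast_pos.2 (NeZero.pos n)
    rw [hγ]
    positivity
  have level (i : Fin n) : 1 / d i + γ * Pw i = max T (1 / d i) := by
    rw [hPw, ← mul_assoc, mul_one_div_cancel hγ0.ne', one_mul, add_comm, max_add, sub_add_cancel,
      zero_add]
  have budget : ∑ i ∈ Finset.univ.erase 0, ‖dft a i‖ ^ 2 ≤ ∑ i ∈ Finset.univ.erase 0, Pw i := by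
    rw [hsum, hP, hρ, Int.self_sub_floor]
    exact sum_norm_dft_sq_erase_zero_le ha
  rw [lmmse, ← hρ, ← hγ, ← Finset.add_sum_erase _ _ (Finset.mem_univ 0), norm_dft_zero_sq, ← hρ,
    hd0, one_div_div, ← mul_assoc]
  simp only [level]
  gcongr 1
  refine sum_one_div_max_le_sum_one_div (fun i _ ↦ one_div_pos.2 (hd i))
    (fun i _ ↦ le_add_of_nonneg_right (by positivity)) ?_
  simp only [← level, Finset.sum_add_distrib, ← Finset.mul_sum]
  gcongr
end

section
/- For every n ≥ 2, all t, W, J > 0, and every d ∈ ℝ^n with strictly positive entries, there exists a ∈ [0,1]^n such that m(n, 2M(n)²t, W, J, d, a) ≤ m*(n, t, W, J, d), where M(n) = (3π/2)β(n)^{−2}. -/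
/-- The real DFT orthonormal basis vectors: with `ω = 2π/n` and `h = ⌈(n-1)/2⌉ = n/2`
(natural division), `ψ_0(i) = 1`, `ψ_j(i) = √2 cos(ωji)` for `0 < j < h`,
`ψ_h(i) = cos(ωhi)` if `n` even and `√2 cos(ωhi)` if `n` odd, and
`ψ_j(i) = √2 sin(ωji)` for `h < j < n`. -/
noncomputable def psi (n : ℕ) (j i : ℕ) : ℝ :=
  if j = 0 then 1
  else if j < n / 2 then Real.sqrt 2 * Real.cos (2 * Real.pi / n * j * i)
  else if j = n / 2 then
    (if n % 2 = 0 then Real.cos (2 * Real.pi / n * j * i)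
     else Real.sqrt 2 * Real.cos (2 * Real.pi / n * j * i))
  else Real.sqrt 2 * Real.sin (2 * Real.pi / n * j * i)

/-- Normalized ℓ¹ norm `(1/n) ∑_{i<n} |ψ_j(i)|` of the `j`-th real DFT basis vector. -/
noncomputable def l1psi (n j : ℕ) : ℝ := (1 / (n : ℝ)) * ∑ i ∈ Finset.range n, |psi n j i|

/-- `β(n) = min_{0 ≤ j < n} (1/n) ∑_i |ψ_j(i)|`. -/
noncomputable def beta (n : ℕ) : ℝ := sInf {x | ∃ j < n, x = l1psi n j}

/-- Nazarov's constant `M(n) = (3π/2) β(n)⁻²`. -/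
noncomputable def Mnaz (n : ℕ) : ℝ := (3 * Real.pi / 2) / (beta n) ^ 2

/-!
Let `b` be an optimal aperture for exposure time `t`, with coefficients `y k` along the basis.
Following Nazarov, among all superpositions `F = ∑ k, ± y k • ψ k` over the nonconstant basis
vectors, scaled so that `‖F‖₂ = 1`, take one maximizing the mean of `Φ ∘ F`, where `Φ' = arctan`.
Flipping a single sign does not increase this mean, so the quantitative convexity of `Φ` forces the
coefficient of `arctan ∘ F` along each `ψ k` to be at least of order `β² |y k| / ‖y‖`. Hence
`a = 1 / 2 ± 2 / (3 π) * arctan ∘ F` is an aperture whose nonzero frequencies dominate those of `b`,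
up to the factor `4 M² ρ(b) (1 - ρ(b))` in squared modulus by Bessel's inequality. That factor,
together with `ρ(a) ≤ 1 / 2` from the choice of sign, compensates for the change of noise level
`W + J ρ`, and the LMMSEs are compared frequency by frequency.
-/

open Real Finset MeasureTheory

lemma add_mul_sub_le_of_convexOn {f : ℝ → ℝ} {x f' : ℝ} (hf : ConvexOn ℝ Set.univ f)
    (hf' : HasDerivAt f f' x) (y : ℝ) : f x + f' * (y - x) ≤ f y := by
  rcases lt_trichotomy x y with hxy | rfl | hyx
  · have h := hf.le_slope_of_hasDerivAt (Set.mem_univ x) (Set.mem_univ y) hxy hf'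
    rw [slope_def_field, le_div_iff₀ (sub_pos.2 hxy)] at h
    linarith
  · simp
  · have h := hf.slope_le_of_hasDerivAt (Set.mem_univ y) (Set.mem_univ x) hyx hf'
    rw [slope_def_field, div_le_iff₀ (sub_pos.2 hyx)] at h
    linarith

lemma abs_arctan_le (x : ℝ) : |arctan x| ≤ π / 2 :=
  abs_le.2 ⟨(neg_pi_div_two_lt_arctan x).le, (arctan_lt_pi_div_two x).le⟩

/-- The primitive of `arctan` vanishing at `0`, the potential maximized over signs in Nazarov's
argument. -/
noncomputable def arctanPrimitive (x : ℝ) : ℝ := x * arctan x - log (1 + x ^ 2) / 2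

lemma hasDerivAt_arctanPrimitive (x : ℝ) : HasDerivAt arctanPrimitive (arctan x) x := by
  have hx : 1 + x ^ 2 ≠ 0 := by positivity
  have hlog := (((hasDerivAt_pow 2 x).const_add 1).log hx).div_const 2
  refine (((hasDerivAt_id x).mul (hasDerivAt_arctan x)).sub hlog).congr_deriv ?_
  simp only [id_eq, Nat.cast_ofNat]
  field_simp
  ring

lemma continuous_arctanPrimitive : Continuous arctanPrimitive :=
  continuous_iff_continuousAt.2 fun x => (hasDerivAt_arctanPrimitive x).continuousAt

/-- The perturbation of `arctanPrimitive` whose second derivative is the nonnegative function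
`(1 - η * (1 + x ^ 2)) ^ 2 / (1 + x ^ 2) = 1 / (1 + x ^ 2) - 2 * η + η ^ 2 * (1 + x ^ 2)`;
its convexity quantifies that of `arctanPrimitive`. -/
noncomputable def perturbedArctanPrimitive (η x : ℝ) : ℝ :=
  arctanPrimitive x + ((η ^ 2 / 2 - η) * x ^ 2 + η ^ 2 / 12 * x ^ 4)

lemma hasDerivAt_perturbedArctanPrimitive (η x : ℝ) :
    HasDerivAt (perturbedArctanPrimitive η)
      (arctan x + ((η ^ 2 - 2 * η) * x + η ^ 2 / 3 * x ^ 3)) x := by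
  refine ((hasDerivAt_arctanPrimitive x).add (((hasDerivAt_pow 2 x).const_mul _).add
    ((hasDerivAt_pow 4 x).const_mul _))).congr_deriv ?_
  push_cast
  ring

lemma convexOn_perturbedArctanPrimitive (η : ℝ) :
    ConvexOn ℝ Set.univ (perturbedArctanPrimitive η) := by
  have hderiv2 (x : ℝ) : HasDerivAt
      (fun x => arctan x + ((η ^ 2 - 2 * η) * x + η ^ 2 / 3 * x ^ 3))
      ((1 - η * (1 + x ^ 2)) ^ 2 / (1 + x ^ 2)) x := by
    refine ((hasDerivAt_arctan x).add (((hasDerivAt_id x).const_mul _).add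
      ((hasDerivAt_pow 3 x).const_mul _))).congr_deriv ?_
    push_cast
    field_simp
    ring
  refine Monotone.convexOn_univ_of_deriv
    (fun x => (hasDerivAt_perturbedArctanPrimitive η x).differentiableAt) ?_
  rw [funext fun x => (hasDerivAt_perturbedArctanPrimitive η x).deriv]
  exact monotone_of_hasDerivAt_nonneg hderiv2 fun x => by simp only [Pi.zero_apply]; positivity

lemma mul_abs_sub_sub_le_arctanPrimitive_sub (c x y : ℝ) :
    c * |y - x| - c ^ 2 * (1 / 2 + (2 * x ^ 2 + y ^ 2) / 6) ≤
      arctanPrimitive y - arctanPrimitive x - arctan x * (y - x) := by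
  rcases eq_or_ne y x with rfl | hne
  · have : 0 ≤ c ^ 2 * (1 / 2 + (2 * y ^ 2 + y ^ 2) / 6) := by positivity
    simpa
  have hgap : |y - x| ≠ 0 := abs_ne_zero.2 (sub_ne_zero.2 hne)
  obtain ⟨η, rfl⟩ : ∃ η, c = η * |y - x| := ⟨c / |y - x|, (div_mul_cancel₀ c hgap).symm⟩
  have htangent := add_mul_sub_le_of_convexOn (convexOn_perturbedArctanPrimitive η)
    (hasDerivAt_perturbedArctanPrimitive η x) y
  have hquartic : 0 ≤ η ^ 2 * (y - x) ^ 4 := by positivity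
  simp only [perturbedArctanPrimitive] at htangent
  rw [mul_pow, mul_assoc, ← sq, sq_abs]
  linarith

lemma abs_arctanPrimitive_le (x : ℝ) : |arctanPrimitive x| ≤ π / 2 * |x| := by
  have hzero : arctanPrimitive 0 = 0 := by simp [arctanPrimitive]
  have hnonneg := mul_abs_sub_sub_le_arctanPrimitive_sub 0 0 x
  have hle := mul_abs_sub_sub_le_arctanPrimitive_sub 0 x 0
  simp only [hzero, arctan_zero] at hnonneg hle
  rw [abs_of_nonneg (by linarith)]
  calc arctanPrimitive x ≤ arctan x * x := by linarith
    _ ≤ |arctan x| * |x| := (le_abs_self _).trans_eq (abs_mul _ _)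
    _ ≤ π / 2 * |x| := by gcongr; exact abs_arctan_le x

/-- The superposition `∑ k, ± f k` with signs `ε`. -/
def signedSum {Ω κ : Type*} [Fintype κ] (f : κ → Ω → ℝ) (ε : κ → ℤˣ) (ω : Ω) : ℝ :=
  ∑ k, ((ε k : ℤ) : ℝ) * f k ω

lemma signedSum_sub_signedSum_update_neg {Ω κ : Type*} [Fintype κ] [DecidableEq κ]
    (f : κ → Ω → ℝ) (ε : κ → ℤˣ) (k : κ) (ω : Ω) :
    signedSum f ε ω - signedSum f (Function.update ε k (-ε k)) ω =
      2 * ((ε k : ℤ) : ℝ) * f k ω := by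
  rw [signedSum, signedSum, ← sum_sub_distrib, sum_eq_single k]
  · simp only [Function.update_self, Units.val_neg, Int.cast_neg]
    ring
  · intro l _ hl
    rw [Function.update_of_ne hl, sub_self]
  · exact fun hk => absurd (mem_univ k) hk

section Nazarov

variable {Ω : Type*} [MeasurableSpace Ω] {μ : Measure Ω}

lemma integrable_arctanPrimitive_comp {u : Ω → ℝ} (hu : Integrable u μ) :
    Integrable (fun ω => arctanPrimitive (u ω)) μ :=
  (hu.abs.const_mul (π / 2)).mono' (continuous_arctanPrimitive.comp_aestronglyMeasurable hu.1)
    (.of_forall fun ω => abs_arctanPrimitive_le (u ω))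

lemma integrable_arctan_comp_mul {u v : Ω → ℝ} (hu : AEStronglyMeasurable u μ)
    (hv : Integrable v μ) : Integrable (fun ω => arctan (u ω) * v ω) μ :=
  hv.bdd_mul (continuous_arctan.comp_aestronglyMeasurable hu)
    (.of_forall fun ω => abs_arctan_le (u ω))

lemma memLp_signedSum {κ : Type*} [Fintype κ] {p : ENNReal} {f : κ → Ω → ℝ}
    (hf : ∀ k, MemLp (f k) p μ) (ε : κ → ℤˣ) : MemLp (signedSum f ε) p μ :=
  memLp_finsetSum _ fun k _ => (hf k).const_mul _

variable [IsProbabilityMeasure μ]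

lemma sq_integral_abs_sub_le_integral_arctan_mul {u v : Ω → ℝ}
    (hu : MemLp u 2 μ) (hv : MemLp v 2 μ)
    (hu_sq : ∫ ω, u ω ^ 2 ∂μ ≤ 1) (hv_sq : ∫ ω, v ω ^ 2 ∂μ ≤ 1)
    (hmax : ∫ ω, arctanPrimitive (v ω) ∂μ ≤ ∫ ω, arctanPrimitive (u ω) ∂μ) :
    (∫ ω, |u ω - v ω| ∂μ) ^ 2 ≤ 4 * ∫ ω, arctan (u ω) * (u ω - v ω) ∂μ := by
  have hu₁ := hu.integrable one_le_two
  have hv₁ := hv.integrable one_le_two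
  have hu₂ := hu.integrable_sq
  have hv₂ := hv.integrable_sq
  have hΦu := integrable_arctanPrimitive_comp hu₁
  have hΦv := integrable_arctanPrimitive_comp hv₁
  have hcross : Integrable (fun ω => arctan (u ω) * (u ω - v ω)) μ :=
    integrable_arctan_comp_mul hu.1 (hu₁.sub hv₁)
  obtain ⟨c, hc⟩ : ∃ c, ∫ ω, |u ω - v ω| ∂μ = 2 * c :=
    ⟨(∫ ω, |u ω - v ω| ∂μ) / 2, by ring⟩
  have hmass : 1 / 2 + (2 * (∫ ω, u ω ^ 2 ∂μ) + ∫ ω, v ω ^ 2 ∂μ) / 6 ≤ 1 := by linarith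
  have hlower : c ^ 2 ≤ ∫ ω, (c * |u ω - v ω| -
      c ^ 2 * (1 / 2 + (2 * u ω ^ 2 + v ω ^ 2) / 6)) ∂μ := by
    rw [integral_sub (by fun_prop) (by fun_prop), integral_const_mul, integral_const_mul,
      integral_add (by fun_prop) (by fun_prop),
      integral_div _ fun ω => 2 * u ω ^ 2 + v ω ^ 2, integral_add (by fun_prop) hv₂,
      integral_const_mul, integral_const, probReal_univ, one_smul, hc]
    linarith [mul_le_mul_of_nonneg_left hmass (sq_nonneg c)]
  have hpointwise (ω : Ω) :
      c * |u ω - v ω| - c ^ 2 * (1 / 2 + (2 * u ω ^ 2 + v ω ^ 2) / 6) ≤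
        arctanPrimitive (v ω) - arctanPrimitive (u ω) + arctan (u ω) * (u ω - v ω) := by
    have h := mul_abs_sub_sub_le_arctanPrimitive_sub c (u ω) (v ω)
    rw [abs_sub_comm] at h
    linarith
  have hupper := hlower.trans (integral_mono (by fun_prop) (by fun_prop) hpointwise)
  rw [integral_add (by fun_prop) hcross, integral_sub hΦv hΦu] at hupper
  rw [hc]
  linarith

variable {κ : Type*} [Fintype κ]

theorem exists_sign_sq_integral_abs_le {f : κ → Ω → ℝ} (hf : ∀ k, MemLp (f k) 2 μ)
    (hf_sq : ∀ ε, ∫ ω, signedSum f ε ω ^ 2 ∂μ ≤ 1) :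
    ∃ ε, ∀ k, (∫ ω, |f k ω| ∂μ) ^ 2 ≤ 2 * |∫ ω, arctan (signedSum f ε ω) * f k ω ∂μ| := by
  classical
  obtain ⟨ε, hmax⟩ := Finite.exists_max fun ε => ∫ ω, arctanPrimitive (signedSum f ε ω) ∂μ
  refine ⟨ε, fun k => ?_⟩
  have hflip := sq_integral_abs_sub_le_integral_arctan_mul (memLp_signedSum hf ε)
    (memLp_signedSum hf (Function.update ε k (-ε k))) (hf_sq _) (hf_sq _) (hmax _)
  simp only [signedSum_sub_signedSum_update_neg, abs_mul, abs_unit_intCast, abs_two, mul_one,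
    mul_left_comm _ (2 * _ : ℝ), integral_const_mul] at hflip
  have habs := le_abs_self (((ε k : ℤ) : ℝ) * ∫ ω, arctan (signedSum f ε ω) * f k ω ∂μ)
  rw [abs_mul, abs_unit_intCast, one_mul] at habs
  linarith

theorem exists_abs_le_one_sq_integral_abs_le {f : κ → Ω → ℝ} (hf : ∀ k, MemLp (f k) 2 μ)
    (hf_sq : ∀ ε, ∫ ω, signedSum f ε ω ^ 2 ∂μ ≤ 1) :
    ∃ g : Ω → ℝ, (∀ ω, |g ω| ≤ 1) ∧
      ∀ k, (∫ ω, |f k ω| ∂μ) ^ 2 ≤ π * |∫ ω, g ω * f k ω ∂μ| := by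
  obtain ⟨ε, hε⟩ := exists_sign_sq_integral_abs_le hf hf_sq
  have hpos : 0 < 2 / π := by positivity
  refine ⟨fun ω => 2 / π * arctan (signedSum f ε ω), fun ω => ?_, fun k => (hε k).trans_eq ?_⟩
  · rw [abs_mul, abs_of_pos hpos, ← le_div_iff₀' hpos, one_div_div]
    exact abs_arctan_le _
  · simp only [mul_assoc, integral_const_mul, abs_mul, abs_of_pos hpos]
    field_simp

theorem exists_abs_le_one_sq_mul_abs_le {ψ : κ → Ω → ℝ} {β : ℝ} (hβ : 0 ≤ β)
    (hψ : ∀ k, MemLp (ψ k) 2 μ) (hψ_abs : ∀ k, β ≤ ∫ ω, |ψ k ω| ∂μ)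
    (hψ_sq : ∀ c : κ → ℝ, ∫ ω, (∑ k, c k * ψ k ω) ^ 2 ∂μ ≤ ∑ k, c k ^ 2) (c : κ → ℝ) :
    ∃ g : Ω → ℝ, (∀ ω, |g ω| ≤ 1) ∧
      ∀ k, β ^ 2 * |c k| ≤ π * √(∑ l, c l ^ 2) * |∫ ω, g ω * ψ k ω ∂μ| := by
  set r := √(∑ l, c l ^ 2)
  have hr_sq : r ^ 2 = ∑ l, c l ^ 2 := sq_sqrt (by positivity)
  obtain ⟨g, hg, hg_coeff⟩ := exists_abs_le_one_sq_integral_abs_le (μ := μ)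
    (f := fun k ω => c k / r * ψ k ω) (fun k => (hψ k).const_mul _) fun ε => by
      simp only [signedSum, ← mul_assoc]
      refine (hψ_sq _).trans ?_
      simp only [← sq_abs (_ * _), abs_mul, abs_unit_intCast, one_mul, sq_abs, div_pow,
        ← sum_div, hr_sq]
      exact div_self_le_one _
  refine ⟨g, hg, fun k => ?_⟩
  rcases eq_or_ne (c k) 0 with hck | hck
  · rw [hck, abs_zero, mul_zero]
    positivity
  have hr : 0 < r :=
    sqrt_pos.2 (sum_pos' (fun l _ => sq_nonneg (c l)) ⟨k, mem_univ k, by positivity⟩)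
  have hscale : 0 < |c k / r| := by positivity
  have hk := hg_coeff k
  simp only [abs_mul, mul_left_comm _ (c k / r), integral_const_mul, mul_pow] at hk
  have hnormalized : |c k / r| * β ^ 2 ≤ π * |∫ ω, g ω * ψ k ω ∂μ| := by
    refine le_of_mul_le_mul_left ?_ hscale
    calc |c k / r| * (|c k / r| * β ^ 2) = |c k / r| ^ 2 * β ^ 2 := by ring
      _ ≤ |c k / r| ^ 2 * (∫ ω, |ψ k ω| ∂μ) ^ 2 := by gcongr; exact hψ_abs k
      _ ≤ |c k / r| * (π * |∫ ω, g ω * ψ k ω ∂μ|) := by linarith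
  calc β ^ 2 * |c k| = r * (|c k / r| * β ^ 2) := by rw [abs_div, abs_of_pos hr]; field_simp
    _ ≤ r * (π * |∫ ω, g ω * ψ k ω ∂μ|) := by gcongr
    _ = π * r * |∫ ω, g ω * ψ k ω ∂μ| := by ring

end Nazarov

section RootsOfUnity

variable {n : ℕ} [NeZero n]

lemma sum_exp_two_pi_div_mul_I (m : ℤ) :
    ∑ i ∈ range n, Complex.exp ((2 * π / n * m * i : ℝ) * Complex.I) =
      if (n : ℤ) ∣ m then (n : ℂ) else 0 := by
  set ζ := Complex.exp (2 * π * Complex.I / n)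
  have hζ : IsPrimitiveRoot ζ n := Complex.isPrimitiveRoot_exp n (NeZero.ne n)
  have hterm (i : ℕ) : Complex.exp ((2 * π / n * m * i : ℝ) * Complex.I) = (ζ ^ m) ^ i := by
    rw [← Complex.exp_int_mul, ← Complex.exp_nat_mul]
    push_cast
    ring_nf
  simp only [hterm]
  split_ifs with hdvd
  · simp [(hζ.zpow_eq_one_iff_dvd m).2 hdvd]
  · rw [geom_sum_eq (mt (hζ.zpow_eq_one_iff_dvd m).1 hdvd), ← zpow_natCast, zpow_comm,
      zpow_natCast, hζ.pow_eq_one, one_zpow, sub_self, zero_div]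

lemma sum_cos_two_pi_div_mul (m : ℤ) :
    ∑ i ∈ range n, cos (2 * π / n * m * i) = if (n : ℤ) ∣ m then (n : ℝ) else 0 := by
  have h := congrArg Complex.re (sum_exp_two_pi_div_mul_I (n := n) m)
  simp only [Complex.re_sum, Complex.exp_ofReal_mul_I_re] at h
  rw [h, apply_ite Complex.re, Complex.natCast_re, Complex.zero_re]

lemma sum_sin_two_pi_div_mul (m : ℤ) : ∑ i ∈ range n, sin (2 * π / n * m * i) = 0 := by
  have h := congrArg Complex.im (sum_exp_two_pi_div_mul_I (n := n) m)
  simp only [Complex.im_sum, Complex.exp_ofReal_mul_I_im] at h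
  rw [h, apply_ite Complex.im, Complex.natCast_im, Complex.zero_im, ite_self]

lemma sum_cos_mul_cos (j k : ℕ) :
    ∑ i ∈ range n, cos (2 * π / n * j * i) * cos (2 * π / n * k * i) =
      ((if (n : ℤ) ∣ j - k then (n : ℝ) else 0) + if (n : ℤ) ∣ j + k then (n : ℝ) else 0) / 2 := by
  rw [← sum_cos_two_pi_div_mul, ← sum_cos_two_pi_div_mul, ← sum_add_distrib, sum_div]
  refine sum_congr rfl fun i _ => ?_
  push_cast
  rw [mul_sub, mul_add, sub_mul, add_mul, ← two_mul_cos_mul_cos]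
  ring

lemma sum_sin_mul_sin (j k : ℕ) :
    ∑ i ∈ range n, sin (2 * π / n * j * i) * sin (2 * π / n * k * i) =
      ((if (n : ℤ) ∣ j - k then (n : ℝ) else 0) - if (n : ℤ) ∣ j + k then (n : ℝ) else 0) / 2 := by
  rw [← sum_cos_two_pi_div_mul, ← sum_cos_two_pi_div_mul, ← sum_sub_distrib, sum_div]
  refine sum_congr rfl fun i _ => ?_
  push_cast
  rw [mul_sub, mul_add, sub_mul, add_mul, ← two_mul_sin_mul_sin]
  ring

lemma sum_sin_mul_cos (j k : ℕ) :
    ∑ i ∈ range n, sin (2 * π / n * j * i) * cos (2 * π / n * k * i) = 0 := by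
  have hsub := sum_sin_two_pi_div_mul (n := n) (j - k)
  have hadd := sum_sin_two_pi_div_mul (n := n) (j + k)
  push_cast at hsub hadd
  simp only [mul_sub, mul_add, sub_mul, add_mul] at hsub hadd
  refine (mul_eq_zero.1 ?_).resolve_left (two_ne_zero' ℝ)
  simp only [mul_sum, ← mul_assoc (2 : ℝ) (sin _), two_mul_sin_mul_cos, sum_add_distrib,
    hsub, hadd, add_zero]

end RootsOfUnity

section Basis

/-- The factor in front of the cosine in `psi n j` for `j ≤ n / 2`: it is `1` when the frequency
`j` is its own reflection modulo `n`, and `√2` otherwise. -/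
noncomputable def cosFactor (n j : ℕ) : ℝ := if j = 0 ∨ 2 * j = n then 1 else √2

lemma cosFactor_ne_zero (n j : ℕ) : cosFactor n j ≠ 0 := by
  unfold cosFactor
  split_ifs <;> simp

lemma psi_of_le_half {n j : ℕ} (hj : j ≤ n / 2) (i : ℕ) :
    psi n j i = cosFactor n j * cos (2 * π / n * j * i) := by
  unfold psi cosFactor
  rcases Nat.eq_zero_or_pos j with rfl | hpos
  · simp
  rcases hj.lt_or_eq with hlt | heq
  · rw [if_neg hpos.ne', if_pos hlt, if_neg (by omega)]
  · rw [if_neg hpos.ne', if_neg heq.not_lt, if_pos heq]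
    split_ifs <;> first | omega | simp

lemma psi_of_half_lt {n j : ℕ} (hj : n / 2 < j) (i : ℕ) :
    psi n j i = √2 * sin (2 * π / n * j * i) := by
  rw [psi, if_neg (by omega), if_neg (by omega), if_neg (by omega)]

lemma psi_zero (n i : ℕ) : psi n 0 i = 1 := if_pos rfl

lemma natCast_dvd_sub_iff {n j k : ℕ} (hj : j < n) (hk : k < n) :
    (n : ℤ) ∣ j - k ↔ j = k := by
  rw [dvd_sub_comm, ← Nat.modEq_iff_dvd, Nat.ModEq, Nat.mod_eq_of_lt hj, Nat.mod_eq_of_lt hk]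

variable {n : ℕ} [NeZero n] {j k : ℕ}

lemma sum_psi_mul_psi_of_le_half (hj : j ≤ n / 2) (hk : k ≤ n / 2) :
    ∑ i ∈ range n, psi n j i * psi n k i = if j = k then (n : ℝ) else 0 := by
  have hn := NeZero.pos n
  simp only [psi_of_le_half hj, psi_of_le_half hk, mul_mul_mul_comm, ← mul_sum, sum_cos_mul_cos,
    natCast_dvd_sub_iff (by omega : j < n) (by omega : k < n)]
  rcases eq_or_ne j k with rfl | hne
  · have hdvd : (n : ℤ) ∣ j + j ↔ j = 0 ∨ 2 * j = n := by
      refine ⟨fun h => ?_, ?_⟩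
      · rcases Nat.eq_zero_or_pos j with h0 | h0
        · exact .inl h0
        · have := Int.le_of_dvd (by omega) h
          omega
      · rintro (rfl | h)
        · simp
        · exact ⟨1, by omega⟩
    simp only [hdvd, cosFactor, if_true]
    split_ifs
    · ring
    · rw [mul_self_sqrt zero_le_two]
      ring
  · have hdvd : ¬ (n : ℤ) ∣ j + k := fun h => by
      have := Int.le_of_dvd (by omega) h
      omega
    simp [hne, hdvd]

lemma sum_psi_mul_psi_of_half_lt (hj : n / 2 < j) (hk : n / 2 < k) (hjn : j < n) (hkn : k < n) :
    ∑ i ∈ range n, psi n j i * psi n k i = if j = k then (n : ℝ) else 0 := by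
  have hdvd : ¬ (n : ℤ) ∣ j + k := fun h => by
    have h' : (n : ℤ) ∣ j + k - n := dvd_sub_self_right.2 h
    have := Int.le_of_dvd (by omega) h'
    omega
  simp only [psi_of_half_lt hj, psi_of_half_lt hk, mul_mul_mul_comm (√2) (sin _),
    ← mul_sum, sum_sin_mul_sin, natCast_dvd_sub_iff hjn hkn, if_neg hdvd,
    mul_self_sqrt zero_le_two]
  split_ifs <;> ring

lemma sum_psi_mul_psi_of_half_lt_of_le_half (hj : n / 2 < j) (hk : k ≤ n / 2) :
    ∑ i ∈ range n, psi n j i * psi n k i = 0 := by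
  simp only [psi_of_half_lt hj, psi_of_le_half hk, mul_mul_mul_comm, ← mul_sum, sum_sin_mul_cos,
    mul_zero]

theorem sum_psi_mul_psi (hj : j < n) (hk : k < n) :
    ∑ i ∈ range n, psi n j i * psi n k i = if j = k then (n : ℝ) else 0 := by
  rcases le_or_gt j (n / 2) with hj' | hj' <;> rcases le_or_gt k (n / 2) with hk' | hk'
  · exact sum_psi_mul_psi_of_le_half hj' hk'
  · simp only [mul_comm (psi n j _), sum_psi_mul_psi_of_half_lt_of_le_half hk' hj',
      if_neg (hj'.trans_lt hk').ne]
  · rw [sum_psi_mul_psi_of_half_lt_of_le_half hj' hk', if_neg (hk'.trans_lt hj').ne']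
  · exact sum_psi_mul_psi_of_half_lt hj' hk' hj hk

/-- The vector `psi n k`, scaled to unit Euclidean norm. -/
noncomputable def unitPsi (n : ℕ) (k : Fin n) : EuclideanSpace ℝ (Fin n) :=
  WithLp.toLp 2 fun i => psi n k i / √n

lemma orthonormal_unitPsi (n : ℕ) [NeZero n] : Orthonormal ℝ (unitPsi n) := by
  refine orthonormal_iff_ite.2 fun k l => ?_
  have hn : (n : ℝ) ≠ 0 := NeZero.ne _
  have h := sum_psi_mul_psi k.isLt l.isLt
  rw [sum_range] at h
  simp only [unitPsi, PiLp.inner_apply, RCLike.inner_apply, conj_trivial, div_mul_div_comm,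
    mul_self_sqrt (Nat.cast_nonneg (α := ℝ) n), ← sum_div, mul_comm (psi n l _), h, Fin.ext_iff]
  split_ifs <;> simp [hn]

end Basis

section Coefficients

/-- The coefficient of `x` along `psi n k`, for the normalized inner product
`(1 / n) * ∑ i, x i * y i`. -/
noncomputable def psiCoeff {n : ℕ} (x : Fin n → ℝ) (k : Fin n) : ℝ :=
  1 / n * ∑ i : Fin n, x i * psi n k i

variable {n : ℕ}

lemma transmissivity_mono {x y : Fin n → ℝ} (hxy : ∀ i, x i ≤ y i) :
    transmissivity x ≤ transmissivity y := by
  unfold transmissivity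
  gcongr with i
  exact hxy i

lemma inner_unitPsi (x : Fin n → ℝ) (k : Fin n) :
    inner ℝ (unitPsi n k) (WithLp.toLp 2 x) = √n * psiCoeff x k := by
  have hn : √(n : ℝ) * (1 / n) = 1 / √n := by
    rw [mul_one_div, sqrt_div_self']
  rw [psiCoeff, ← mul_assoc, hn, mul_sum]
  simp only [unitPsi, PiLp.inner_apply, RCLike.inner_apply, conj_trivial]
  exact sum_congr rfl fun i _ => by ring

variable [NeZero n]

theorem sum_psiCoeff_sq_le (x : Fin n → ℝ) :
    ∑ k, psiCoeff x k ^ 2 ≤ 1 / n * ∑ i, x i ^ 2 := by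
  have hn : (0 : ℝ) < n := Nat.cast_pos.2 (NeZero.pos n)
  have h := (orthonormal_unitPsi n).sum_inner_products_le (WithLp.toLp 2 x) (s := univ)
  simp only [inner_unitPsi, norm_mul, mul_pow, norm_eq_abs, sq_abs, sq_sqrt hn.le, ← mul_sum,
    EuclideanSpace.real_norm_sq_eq] at h
  rwa [one_div_mul_eq_div, le_div_iff₀' hn]

theorem average_sq_sum_mul_psi (c : Fin n → ℝ) :
    1 / n * ∑ i : Fin n, (∑ k, c k * psi n k i) ^ 2 = ∑ k, c k ^ 2 := by
  have h := (orthonormal_unitPsi n).inner_sum c c univ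
  rw [real_inner_self_eq_norm_sq, EuclideanSpace.real_norm_sq_eq] at h
  simp only [unitPsi, WithLp.ofLp_sum, WithLp.ofLp_smul, Finset.sum_apply, Pi.smul_apply,
    smul_eq_mul, mul_div_assoc', ← sum_div, div_pow, sq_sqrt (Nat.cast_nonneg (α := ℝ) n),
    conj_trivial, ← sq] at h
  rwa [one_div_mul_eq_div]

lemma psiCoeff_zero_right (x : Fin n → ℝ) : psiCoeff x 0 = transmissivity x := by
  simp [psiCoeff, transmissivity, psi_zero]

lemma transmissivity_const_add_mul (r s : ℝ) (x : Fin n → ℝ) :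
    transmissivity (fun i => r + s * x i) = r + s * transmissivity x := by
  have hn : (n : ℝ) ≠ 0 := NeZero.ne _
  simp only [transmissivity, sum_add_distrib, sum_const, card_univ, Fintype.card_fin, ← mul_sum,
    nsmul_eq_mul]
  field_simp

lemma sum_psi_eq_zero {k : Fin n} (hk : k ≠ 0) : ∑ i : Fin n, psi n k i = 0 := by
  have h := sum_psi_mul_psi k.isLt (NeZero.pos n)
  simpa only [psi_zero, mul_one, sum_range, Fin.val_eq_zero_iff, hk, if_false] using h

lemma psiCoeff_const_add_mul {k : Fin n} (hk : k ≠ 0) (r s : ℝ) (x : Fin n → ℝ) :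
    psiCoeff (fun i => r + s * x i) k = s * psiCoeff x k := by
  simp only [psiCoeff, add_mul, sum_add_distrib, mul_assoc, ← mul_sum, sum_psi_eq_zero hk]
  ring

lemma transmissivity_const (r : ℝ) : transmissivity (fun _ : Fin n => r) = r := by
  simpa using transmissivity_const_add_mul r 0 (0 : Fin n → ℝ)

lemma transmissivity_mem_Icc {r s : ℝ} {x : Fin n → ℝ} (hx : ∀ i, x i ∈ Set.Icc r s) :
    transmissivity x ∈ Set.Icc r s :=
  ⟨(transmissivity_const (n := n) r).symm.trans_le (transmissivity_mono fun i => (hx i).1),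
    (transmissivity_mono fun i => (hx i).2).trans_eq (transmissivity_const s)⟩

lemma sum_erase_zero_psiCoeff_sq_le {b : Fin n → ℝ} (hb : ∀ i, b i ∈ Set.Icc (0 : ℝ) 1) :
    ∑ k ∈ univ.erase 0, psiCoeff b k ^ 2 ≤ transmissivity b * (1 - transmissivity b) := by
  have hsq : transmissivity (fun i => b i ^ 2) ≤ transmissivity b :=
    transmissivity_mono fun i => pow_le_of_le_one (hb i).1 (hb i).2 two_ne_zero
  have hbessel : ∑ k, psiCoeff b k ^ 2 ≤ transmissivity b := (sum_psiCoeff_sq_le b).trans hsq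
  rw [← add_sum_erase _ _ (mem_univ 0), psiCoeff_zero_right] at hbessel
  linarith

end Coefficients

section Dft

variable {n : ℕ}

lemma dft_eq_sum_cos_sub_sum_sin_mul_I (a : Fin n → ℝ) (j : Fin n) :
    dft a j = (∑ i : Fin n, a i * cos (2 * π / n * j * i) : ℝ) -
      (∑ i : Fin n, a i * sin (2 * π / n * j * i) : ℝ) * Complex.I := by
  rw [dft]
  push_cast
  rw [sum_mul, ← sum_sub_distrib]
  refine sum_congr rfl fun i _ => ?_
  rw [mul_assoc (a i : ℂ), ← mul_sub, Complex.cos_sub_sin_I]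
  ring_nf

lemma norm_sq_dft (a : Fin n → ℝ) (j : Fin n) :
    ‖dft a j‖ ^ 2 = (∑ i : Fin n, a i * cos (2 * π / n * j * i)) ^ 2 +
      (∑ i : Fin n, a i * sin (2 * π / n * j * i)) ^ 2 := by
  rw [dft_eq_sum_cos_sub_sum_sin_mul_I, Complex.sq_norm, Complex.normSq_apply]
  simp only [Complex.sub_re, Complex.sub_im, Complex.re_ofReal_mul, Complex.im_ofReal_mul,
    Complex.ofReal_re, Complex.ofReal_im, Complex.I_re, Complex.I_im]
  ring

lemma two_pi_div_mul_sub_mul [NeZero n] {j : ℕ} (hj : j ≤ n) (i : ℕ) :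
    2 * π / n * (n - j : ℕ) * i = i * (2 * π) - 2 * π / n * j * i := by
  have hn : (n : ℝ) ≠ 0 := NeZero.ne _
  rw [Nat.cast_sub hj]
  field_simp

variable [NeZero n]

lemma norm_sq_dft_zero (a : Fin n → ℝ) : ‖dft a 0‖ ^ 2 = (n * transmissivity a) ^ 2 := by
  have hn : (n : ℝ) ≠ 0 := NeZero.ne _
  simp [norm_sq_dft, transmissivity, hn]

lemma exists_cos_eq_mul_psi {j : Fin n} (hj : j ≠ 0) :
    ∃ k : Fin n, k ≠ 0 ∧ ∃ c : ℝ, ∀ i : ℕ, cos (2 * π / n * j * i) = c * psi n k i := by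
  have hpos : 0 < (j : ℕ) := Fin.pos_iff_ne_zero.2 hj
  rcases le_or_gt (j : ℕ) (n / 2) with hle | hlt
  · refine ⟨j, hj, (cosFactor n j)⁻¹, fun i => ?_⟩
    rw [psi_of_le_half hle, inv_mul_cancel_left₀ (cosFactor_ne_zero n j)]
  · refine ⟨⟨n - j, by omega⟩, by simp [Fin.ext_iff]; omega, (cosFactor n (n - j))⁻¹, fun i => ?_⟩
    rw [psi_of_le_half (by simp; omega), inv_mul_cancel_left₀ (cosFactor_ne_zero n _),
      two_pi_div_mul_sub_mul j.isLt.le, cos_nat_mul_two_pi_sub]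

lemma exists_sin_eq_mul_psi {j : Fin n} (hj : j ≠ 0) :
    ∃ k : Fin n, k ≠ 0 ∧ ∃ c : ℝ, ∀ i : ℕ, sin (2 * π / n * j * i) = c * psi n k i := by
  have hpos : 0 < (j : ℕ) := Fin.pos_iff_ne_zero.2 hj
  have hsqrt : √(2 : ℝ) ≠ 0 := by simp
  rcases lt_trichotomy (2 * (j : ℕ)) n with hlt | heq | hgt
  · refine ⟨⟨n - j, by omega⟩, by simp [Fin.ext_iff]; omega, -(√2)⁻¹, fun i => ?_⟩
    rw [psi_of_half_lt (by simp; omega), neg_mul, inv_mul_cancel_left₀ hsqrt,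
      two_pi_div_mul_sub_mul j.isLt.le, sin_nat_mul_two_pi_sub, neg_neg]
  · refine ⟨j, hj, 0, fun i => ?_⟩
    have hangle : 2 * π / n * j * i = i * π := by
      have hn : (n : ℝ) = 2 * j := by exact_mod_cast heq.symm
      rw [hn]
      field_simp
    rw [hangle, sin_nat_mul_pi, zero_mul]
  · refine ⟨j, hj, (√2)⁻¹, fun i => ?_⟩
    rw [psi_of_half_lt (by omega), inv_mul_cancel_left₀ hsqrt]

lemma norm_sq_dft_le_of_psiCoeff_sq_le {a b : Fin n → ℝ} {C : ℝ}
    (h : ∀ k ≠ 0, psiCoeff b k ^ 2 ≤ C * psiCoeff a k ^ 2) {j : Fin n} (hj : j ≠ 0) :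
    ‖dft b j‖ ^ 2 ≤ C * ‖dft a j‖ ^ 2 := by
  have hn : (n : ℝ) ≠ 0 := NeZero.ne _
  have hsum (c : ℝ) (k : Fin n) (x : Fin n → ℝ) :
      ∑ i : Fin n, x i * (c * psi n k i) = n * c * psiCoeff x k := by
    simp only [psiCoeff, mul_left_comm (x _), ← mul_sum]
    field_simp
  obtain ⟨k, hk, c, hcos⟩ := exists_cos_eq_mul_psi hj
  obtain ⟨l, hl, s, hsin⟩ := exists_sin_eq_mul_psi hj
  simp only [norm_sq_dft, hcos, hsin, hsum, mul_pow]
  have hk' := mul_le_mul_of_nonneg_left (h k hk) (by positivity : 0 ≤ n ^ 2 * c ^ 2)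
  have hl' := mul_le_mul_of_nonneg_left (h l hl) (by positivity : 0 ≤ n ^ 2 * s ^ 2)
  linarith

end Dft

section Beta

variable {n : ℕ}

lemma finite_setOf_l1psi (n : ℕ) : {x | ∃ j < n, x = l1psi n j}.Finite := by
  refine ((Set.finite_Iio n).image (l1psi n)).subset ?_
  rintro _ ⟨j, hj, rfl⟩
  exact ⟨j, hj, rfl⟩

lemma beta_le_l1psi {j : ℕ} (hj : j < n) : beta n ≤ l1psi n j :=
  csInf_le (finite_setOf_l1psi n).bddBelow ⟨j, hj, rfl⟩

variable [NeZero n]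

lemma l1psi_pos {j : ℕ} (hj : j < n) : 0 < l1psi n j := by
  have hn : (0 : ℝ) < n := Nat.cast_pos.2 (NeZero.pos n)
  have hne : ∑ i ∈ range n, psi n j i * psi n j i ≠ 0 := by
    rw [sum_psi_mul_psi hj hj, if_pos rfl]
    exact hn.ne'
  obtain ⟨i, hi, hpsi⟩ := exists_ne_zero_of_sum_ne_zero hne
  exact mul_pos (one_div_pos.2 hn) <| sum_pos' (fun i _ => abs_nonneg _)
    ⟨i, hi, abs_pos.2 (left_ne_zero_of_mul hpsi)⟩

lemma beta_pos : 0 < beta n := by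
  have hne : {x | ∃ j < n, x = l1psi n j}.Nonempty := ⟨_, 0, NeZero.pos n, rfl⟩
  obtain ⟨j, hj, hbeta⟩ := hne.csInf_mem (finite_setOf_l1psi n)
  exact (l1psi_pos hj).trans_eq hbeta.symm

lemma beta_le_one : beta n ≤ 1 := by
  have hn : (n : ℝ) ≠ 0 := NeZero.ne _
  exact (beta_le_l1psi (NeZero.pos n)).trans_eq (by simp [l1psi, psi_zero, hn])

lemma nine_halves_le_Mnaz : 9 / 2 ≤ Mnaz n := by
  have hbeta : beta n ^ 2 ≤ 1 := pow_le_one₀ beta_pos.le beta_le_one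
  rw [Mnaz, le_div_iff₀ (pow_pos beta_pos 2)]
  linarith [pi_gt_three]

end Beta

section Aperture

lemma integral_uniformOn_univ {ι : Type*} [Fintype ι] [MeasurableSpace ι]
    [MeasurableSingletonClass ι] (f : ι → ℝ) :
    ∫ i, f i ∂ProbabilityTheory.uniformOn Set.univ = 1 / Fintype.card ι * ∑ i, f i := by
  simp [integral_fintype, Measure.real, ProbabilityTheory.uniformOn_univ, mul_sum]

variable {n : ℕ} [NeZero n]

theorem exists_abs_le_one_beta_sq_mul_abs_le (c : Fin n → ℝ) :
    ∃ g : Fin n → ℝ, (∀ i, |g i| ≤ 1) ∧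
      ∀ k, beta n ^ 2 * |c k| ≤ π * √(∑ l, c l ^ 2) * |psiCoeff g k| := by
  obtain ⟨g, hg, hcoeff⟩ := exists_abs_le_one_sq_mul_abs_le
    (μ := ProbabilityTheory.uniformOn Set.univ) (ψ := fun k i : Fin n => psi n k i)
    beta_pos.le (fun k => .of_discrete)
    (fun k => by
      simpa only [integral_uniformOn_univ, Fintype.card_fin, l1psi, sum_range]
        using beta_le_l1psi k.isLt)
    (fun c => by rw [integral_uniformOn_univ, Fintype.card_fin, average_sq_sum_mul_psi]) c
  simp only [integral_uniformOn_univ, Fintype.card_fin] at hcoeff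
  exact ⟨g, hg, hcoeff⟩

lemma exists_transmissivity_nonpos_beta_sq_mul_abs_le (c : Fin n → ℝ) :
    ∃ g : Fin n → ℝ, (∀ i, |g i| ≤ 1) ∧ transmissivity g ≤ 0 ∧
      ∀ k, beta n ^ 2 * |c k| ≤ π * √(∑ l, c l ^ 2) * |psiCoeff g k| := by
  obtain ⟨g, hg, hcoeff⟩ := exists_abs_le_one_beta_sq_mul_abs_le c
  rcases le_total (transmissivity g) 0 with hρ | hρ
  · exact ⟨g, hg, hρ, hcoeff⟩
  · refine ⟨-g, by simpa using hg, ?_, ?_⟩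
    · simpa [transmissivity] using hρ
    · simpa [psiCoeff] using hcoeff

lemma sq_le_mul_sq_of_beta_sq_mul_abs_le {E x y : ℝ} (hE : 0 ≤ E)
    (h : beta n ^ 2 * |x| ≤ π * √E * |y|) : x ^ 2 ≤ 4 * Mnaz n ^ 2 * E * (1 / 3 * y) ^ 2 := by
  have habs : |x| ≤ 2 * Mnaz n * √E * (1 / 3 * |y|) := by
    rw [← le_div_iff₀' (pow_pos beta_pos 2)] at h
    refine h.trans_eq ?_
    rw [Mnaz]
    ring
  calc x ^ 2 = |x| ^ 2 := (sq_abs _).symm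
    _ ≤ (2 * Mnaz n * √E * (1 / 3 * |y|)) ^ 2 := by gcongr
    _ = 4 * Mnaz n ^ 2 * E * (1 / 3 * y) ^ 2 := by
      rw [mul_pow, mul_pow, mul_pow _ |y|, sq_sqrt hE, sq_abs]
      ring

theorem exists_aperture_psiCoeff_sq_le {b : Fin n → ℝ} (hb : ∀ i, b i ∈ Set.Icc (0 : ℝ) 1) :
    ∃ a : Fin n → ℝ, (∀ i, a i ∈ Set.Icc (0 : ℝ) 1) ∧ transmissivity a ∈ Set.Icc (1 / 6) (1 / 2) ∧
      ∀ k ≠ 0, psiCoeff b k ^ 2 ≤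
        4 * Mnaz n ^ 2 * (transmissivity b * (1 - transmissivity b)) * psiCoeff a k ^ 2 := by
  set c : Fin n → ℝ := fun k => if k = 0 then 0 else psiCoeff b k
  have hc_sq : ∑ k, c k ^ 2 ≤ transmissivity b * (1 - transmissivity b) := by
    refine le_of_eq_of_le ?_ (sum_erase_zero_psiCoeff_sq_le hb)
    simp [c, ite_pow, sum_ite, filter_ne']
  obtain ⟨g, hg, hρ, hcoeff⟩ := exists_transmissivity_nonpos_beta_sq_mul_abs_le c
  have hg_mem (i : Fin n) : g i ∈ Set.Icc (-1) 1 := abs_le.1 (hg i)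
  have hρ' := (transmissivity_mem_Icc hg_mem).1
  -- The slope `1 / 3` keeps the transmissivity at least `1 / 6`, as frequency `0` requires.
  refine ⟨fun i => 1 / 2 + 1 / 3 * g i, fun i => ?_, ?_, fun k hk => ?_⟩
  · obtain ⟨hlower, hupper⟩ := hg_mem i
    constructor <;> linarith
  · rw [transmissivity_const_add_mul]
    constructor <;> linarith
  have hck : c k = psiCoeff b k := if_neg hk
  rw [psiCoeff_const_add_mul hk, ← hck]
  calc c k ^ 2 ≤ 4 * Mnaz n ^ 2 * (∑ l, c l ^ 2) * (1 / 3 * psiCoeff g k) ^ 2 :=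
        sq_le_mul_sq_of_beta_sq_mul_abs_le (by positivity) (hcoeff k)
    _ ≤ _ := by gcongr

end Aperture

section Lmmse

/-- The noise variance `W + J * ρ` in the denominator of the factor `γ` of the LMMSE. -/
noncomputable def noiseLevel {n : ℕ} (W J : ℝ) (a : Fin n → ℝ) : ℝ :=
  W + J * transmissivity a

lemma mul_add_mul_le_add_mul {v W J p q : ℝ} (hW : 0 ≤ W) (hJ : 0 ≤ J) (hv : v ≤ 1)
    (hvp : v * p ≤ q) : v * (W + J * p) ≤ W + J * q := by
  calc v * (W + J * p) = v * W + J * (v * p) := by ring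
    _ ≤ 1 * W + J * q := by gcongr
    _ = W + J * q := by rw [one_mul]

variable {n : ℕ} {t W J C : ℝ} {d a b : Fin n → ℝ}

lemma lmmse_mul_le_lmmse (ht : 0 ≤ t) (hd : ∀ i, 0 < d i)
    (ha : 0 < noiseLevel W J a) (hb : 0 < noiseLevel W J b)
    (h : ∀ i, noiseLevel W J a * ‖dft b i‖ ^ 2 ≤ C * noiseLevel W J b * ‖dft a i‖ ^ 2) :
    lmmse n (C * t) W J d a ≤ lmmse n t W J d b := by
  refine sum_le_sum fun i _ => ?_
  have hdi := hd i
  gcongr 1 / (1 / d i + ?_)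
  have hquot : ‖dft b i‖ ^ 2 / noiseLevel W J b ≤ C * ‖dft a i‖ ^ 2 / noiseLevel W J a := by
    rw [div_le_div_iff₀ hb ha]
    linarith [h i]
  calc t / (n * noiseLevel W J b) * ‖dft b i‖ ^ 2
      = t / n * (‖dft b i‖ ^ 2 / noiseLevel W J b) := by
        rw [div_mul_div_comm, div_mul_eq_mul_div]
    _ ≤ t / n * (C * ‖dft a i‖ ^ 2 / noiseLevel W J a) := by gcongr
    _ = C * t / (n * noiseLevel W J a) * ‖dft a i‖ ^ 2 := by
      rw [div_mul_div_comm]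
      ring

lemma noiseLevel_mul_norm_sq_dft_le (hW : 0 ≤ W) (hJ : 0 ≤ J) (hC : 0 ≤ C)
    (ha : transmissivity a ∈ Set.Icc 0 (1 / 2)) (hb : 0 ≤ transmissivity b) {i : Fin n}
    (h : ‖dft b i‖ ^ 2 ≤ 4 * C * (transmissivity b * (1 - transmissivity b)) * ‖dft a i‖ ^ 2) :
    noiseLevel W J a * ‖dft b i‖ ^ 2 ≤ 2 * C * noiseLevel W J b * ‖dft a i‖ ^ 2 := by
  unfold noiseLevel
  set p := transmissivity a
  set q := transmissivity b
  obtain ⟨hp₀, hp⟩ := ha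
  have hnoise : 2 * (q * (1 - q)) * (W + J * p) ≤ W + J * q :=
    mul_add_mul_le_add_mul hW hJ (by linarith [sq_nonneg (2 * q - 1)]) <|
      calc 2 * (q * (1 - q)) * p ≤ 2 * (q * 1) * (1 / 2) := by gcongr; exact sub_le_self 1 hb
        _ = q := by ring
  calc (W + J * p) * ‖dft b i‖ ^ 2
      ≤ (W + J * p) * (4 * C * (q * (1 - q)) * ‖dft a i‖ ^ 2) := by gcongr
    _ = 2 * C * ‖dft a i‖ ^ 2 * (2 * (q * (1 - q)) * (W + J * p)) := by ring
    _ ≤ 2 * C * ‖dft a i‖ ^ 2 * (W + J * q) := by gcongr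
    _ = 2 * C * (W + J * q) * ‖dft a i‖ ^ 2 := by ring

variable [NeZero n]

lemma noiseLevel_pos (hW : 0 < W) (hJ : 0 ≤ J) (ha : ∀ i, a i ∈ Set.Icc (0 : ℝ) 1) :
    0 < noiseLevel W J a :=
  add_pos_of_pos_of_nonneg hW (mul_nonneg hJ (transmissivity_mem_Icc ha).1)

lemma continuousOn_lmmse (ht : 0 ≤ t) (hW : 0 < W) (hJ : 0 ≤ J) (hd : ∀ i, 0 < d i) :
    ContinuousOn (lmmse n t W J d) (Set.univ.pi fun _ => Set.Icc 0 1) := by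
  have hn : (n : ℝ) ≠ 0 := NeZero.ne _
  have htransmissivity : Continuous (transmissivity : (Fin n → ℝ) → ℝ) := by
    unfold transmissivity
    fun_prop
  have hdft (i : Fin n) : Continuous fun a : Fin n → ℝ => dft a i := by
    unfold dft
    fun_prop
  refine continuousOn_finsetSum _ fun i _ => ?_
  have hγ : ContinuousOn (fun a : Fin n → ℝ => t / (n * noiseLevel W J a))
      (Set.univ.pi fun _ => Set.Icc 0 1) :=
    continuousOn_const.div (by unfold noiseLevel; fun_prop) fun a ha =>
      mul_ne_zero hn (noiseLevel_pos hW hJ fun i => ha i trivial).ne'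
  refine continuousOn_const.div
    (continuousOn_const.add (hγ.mul ((hdft i).norm.pow 2).continuousOn)) fun a ha => ?_
  have hdi := hd i
  have hnoise := noiseLevel_pos hW hJ fun i => ha i trivial
  positivity

lemma exists_lmmse_le_lmmseOpt (ht : 0 ≤ t) (hW : 0 < W) (hJ : 0 ≤ J) (hd : ∀ i, 0 < d i) :
    ∃ b : Fin n → ℝ, (∀ i, b i ∈ Set.Icc (0 : ℝ) 1) ∧ lmmse n t W J d b ≤ lmmseOpt n t W J d := by
  obtain ⟨b, hb, hmin⟩ := (isCompact_univ_pi fun _ : Fin n => isCompact_Icc).exists_isMinOn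
    (Set.univ_pi_nonempty_iff.2 fun _ => Set.nonempty_Icc.2 zero_le_one)
    (continuousOn_lmmse ht hW hJ hd)
  refine ⟨b, fun i => hb i trivial, le_csInf ⟨_, b, fun i => hb i trivial, rfl⟩ ?_⟩
  rintro _ ⟨a, ha, rfl⟩
  exact hmin (Set.mem_univ_pi.2 ha)

lemma noiseLevel_mul_norm_sq_dft_zero_le (hW : 0 ≤ W) (hJ : 0 ≤ J)
    (ha : transmissivity a ∈ Set.Icc (1 / 6) 1) (hb : transmissivity b ∈ Set.Icc 0 1) :
    noiseLevel W J a * ‖dft b 0‖ ^ 2 ≤ 2 * Mnaz n ^ 2 * noiseLevel W J b * ‖dft a 0‖ ^ 2 := by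
  rw [norm_sq_dft_zero, norm_sq_dft_zero]
  unfold noiseLevel
  set p := transmissivity a
  set q := transmissivity b
  have hq : 0 ≤ q := hb.1
  have hnoise : q ^ 2 * (W + J * p) ≤ W + J * q :=
    mul_add_mul_le_add_mul hW hJ (pow_le_one₀ hq hb.2) <|
      calc q ^ 2 * p ≤ q ^ 2 * 1 := by gcongr; exact ha.2
        _ ≤ q := by rw [mul_one]; exact pow_le_of_le_one hq hb.2 two_ne_zero
  have hM : 1 ≤ 2 * Mnaz n ^ 2 * p ^ 2 :=
    calc (1 : ℝ) ≤ 2 * (9 / 2) ^ 2 * (1 / 6) ^ 2 := by norm_num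
      _ ≤ 2 * Mnaz n ^ 2 * p ^ 2 := by gcongr; exacts [nine_halves_le_Mnaz, ha.1]
  calc (W + J * p) * (n * q) ^ 2 = n ^ 2 * (q ^ 2 * (W + J * p)) := by ring
    _ ≤ n ^ 2 * (1 * (W + J * q)) := by rw [one_mul]; gcongr
    _ ≤ n ^ 2 * (2 * Mnaz n ^ 2 * p ^ 2 * (W + J * q)) := by gcongr
    _ = 2 * Mnaz n ^ 2 * (W + J * q) * (n * p) ^ 2 := by ring

end Lmmse

/-- Prop. 4: for all `n ≥ 2`, `t, W, J > 0` and any positive scene prior `d`, there is an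
aperture `a ∈ [0,1]^n` which, with exposure time `2M(n)² t`, matches the optimal LMMSE
at exposure time `t`. -/
theorem nazarov_aperture_factor
    (n : ℕ) (hn : 2 ≤ n) (t W J : ℝ) (ht : 0 < t) (hW : 0 < W) (hJ : 0 < J)
    (d : Fin n → ℝ) (hd : ∀ i, 0 < d i) :
    ∃ a : Fin n → ℝ, (∀ i, a i ∈ Set.Icc (0 : ℝ) 1) ∧
      lmmse n (2 * Mnaz n ^ 2 * t) W J d a ≤ lmmseOpt n t W J d := by
  have : NeZero n := ⟨by omega⟩
  obtain ⟨b, hb, hopt⟩ := exists_lmmse_le_lmmseOpt ht.le hW hJ.le hd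
  obtain ⟨a, ha, hρa, hcoeff⟩ := exists_aperture_psiCoeff_sq_le hb
  have hρb := transmissivity_mem_Icc hb
  refine ⟨a, ha, le_trans (lmmse_mul_le_lmmse ht.le hd (noiseLevel_pos hW hJ.le ha)
    (noiseLevel_pos hW hJ.le hb) fun i => ?_) hopt⟩
  rcases eq_or_ne i 0 with rfl | hi
  · exact noiseLevel_mul_norm_sq_dft_zero_le hW.le hJ.le ⟨hρa.1, by linarith [hρa.2]⟩ hρb
  · exact noiseLevel_mul_norm_sq_dft_le hW.le hJ.le (sq_nonneg _) ⟨by linarith [hρa.1], hρa.2⟩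
      hρb.1 (norm_sq_dft_le_of_psiCoeff_sq_le hcoeff hi)
end

section
/- For every n ≥ 1 and every j with 0 ≤ j < n, the normalized ℓ¹ norm of the basis vector ψ_j satisfies (1/n)∑_{i=0}^{n−1} |ψ_j(i)| ≥ 1/√2; consequently β(n) ≥ 1/√2 for all n ≥ 1. -/
/-! Each `ψ_j` satisfies `∑ i, ψ_j(i)² = n` and `|ψ_j| ≤ √2` pointwise, so
`n = ∑ i, |ψ_j(i)|² ≤ √2 ∑ i, |ψ_j(i)|`. For the sum of squares, the double-angle formula leaves a
cosine summed over full periods, which vanishes unless `n ∣ 2j`; the exceptional vectors `j = 0` and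
`2j = n` take only the values `±1`. -/

section SumOverPeriod

open Real Finset

theorem sum_range_cos_two_pi_div_mul_add_eq_zero {n : ℕ} {m : ℤ} (hm : ¬(n : ℤ) ∣ m) (b : ℝ) :
    ∑ i ∈ range n, cos (2 * π / n * m * i + b) = 0 := by
  rcases eq_or_ne n 0 with rfl | hn
  · simp
  have hn' : (n : ℝ) ≠ 0 := Nat.cast_ne_zero.mpr hn
  have frequency_ne (k : ℤ) : 2 * π / n * m ≠ k * (2 * π) := by
    intro h
    have hmk : (m : ℝ) = n * k := by
      field_simp at h
      exact h
    exact hm ⟨k, mod_cast hmk⟩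
  have half_period : n * (2 * π / n * m) / 2 = m * π := by field_simp
  rw [Real.sum_cos n frequency_ne, half_period, sin_int_mul_pi, zero_mul, zero_div]

theorem sum_range_sq_sqrt_two_mul_cos {n : ℕ} {m : ℤ} (hm : ¬(n : ℤ) ∣ 2 * m) (b : ℝ) :
    ∑ i ∈ range n, (√2 * cos (2 * π / n * m * i + b)) ^ 2 = n := by
  have double_angle (i : ℕ) : (√2 * cos (2 * π / n * m * i + b)) ^ 2 =
      1 + cos (2 * π / n * (2 * m : ℤ) * i + 2 * b) := by
    rw [mul_pow, sq_sqrt zero_le_two, cos_sq]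
    push_cast
    ring_nf
  simp only [double_angle, sum_add_distrib, sum_range_cos_two_pi_div_mul_add_eq_zero hm]
  simp

theorem sum_range_sq_sqrt_two_mul_sin {n : ℕ} {m : ℤ} (hm : ¬(n : ℤ) ∣ 2 * m) (b : ℝ) :
    ∑ i ∈ range n, (√2 * sin (2 * π / n * m * i + b)) ^ 2 = n := by
  simpa only [← add_sub_assoc, cos_sub_pi_div_two] using
    sum_range_sq_sqrt_two_mul_cos hm (b - π / 2)

theorem sq_cos_two_pi_div_mul_eq_one {n : ℕ} (hn : n ≠ 0) {m : ℤ} (hm : (n : ℤ) ∣ 2 * m) (i : ℤ) :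
    cos (2 * π / n * m * i) ^ 2 = 1 := by
  obtain ⟨k, hk⟩ := hm
  have hk' : (2 * m : ℝ) = n * k := mod_cast hk
  have angle_eq : 2 * π / n * m * i = (k * i : ℤ) * π := by
    push_cast
    field_simp
    linear_combination i * hk'
  rw [angle_eq, ← sq_abs, abs_cos_int_mul_pi, one_pow]

end SumOverPeriod

theorem sum_sq_le_sum_abs_mul {ι R : Type*} [Ring R] [LinearOrder R] [IsOrderedRing R]
    {s : Finset ι} {f : ι → R} {C : R} (hf : ∀ i ∈ s, |f i| ≤ C) :
    ∑ i ∈ s, f i ^ 2 ≤ (∑ i ∈ s, |f i|) * C := by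
  rw [Finset.sum_mul]
  refine Finset.sum_le_sum fun i hi => ?_
  calc f i ^ 2 = |f i| * |f i| := by rw [← sq_abs, sq]
    _ ≤ |f i| * C := mul_le_mul_of_nonneg_left (hf i hi) (abs_nonneg _)

theorem sum_sq_psi {n j : ℕ} (hj : j < n) : ∑ i ∈ Finset.range n, psi n j i ^ 2 = n := by
  have not_dvd (h0 : j ≠ 0) (h2 : 2 * j ≠ n) : ¬(n : ℤ) ∣ 2 * (j : ℤ) := by
    intro h
    exact h2 (Nat.eq_of_dvd_of_lt_two_mul (by omega) (by exact_mod_cast h) (by omega))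
  have sum_cos (h0 : j ≠ 0) (h2 : 2 * j ≠ n) :
      ∑ i ∈ Finset.range n, (√2 * Real.cos (2 * Real.pi / n * j * i)) ^ 2 = n := by
    simpa using sum_range_sq_sqrt_two_mul_cos (not_dvd h0 h2) 0
  unfold psi
  split_ifs with h0 hlt hmid heven
  · simp
  · exact sum_cos h0 (by omega)
  · have dvd : (n : ℤ) ∣ 2 * (j : ℤ) := ⟨1, by omega⟩
    have sq_eq_one (i : ℕ) : Real.cos (2 * Real.pi / n * j * i) ^ 2 = 1 :=
      mod_cast sq_cos_two_pi_div_mul_eq_one (by omega) dvd i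
    simp [sq_eq_one]
  · exact sum_cos h0 (by omega)
  · simpa using sum_range_sq_sqrt_two_mul_sin (not_dvd h0 (by omega)) 0

theorem abs_psi_le_sqrt_two (n j i : ℕ) : |psi n j i| ≤ √2 := by
  have one_le : 1 ≤ √2 := Real.one_le_sqrt.mpr one_le_two
  have abs_mul_le {x : ℝ} (hx : |x| ≤ 1) : |√2 * x| ≤ √2 := by
    rw [abs_mul, abs_of_nonneg (Real.sqrt_nonneg 2)]
    exact mul_le_of_le_one_right (Real.sqrt_nonneg 2) hx
  unfold psi
  split_ifs
  · rwa [abs_one]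
  · exact abs_mul_le (Real.abs_cos_le_one _)
  · exact (Real.abs_cos_le_one _).trans one_le
  · exact abs_mul_le (Real.abs_cos_le_one _)
  · exact abs_mul_le (Real.abs_sin_le_one _)

theorem inv_sqrt_two_le_l1psi {n j : ℕ} (hj : j < n) : 1 / √2 ≤ l1psi n j := by
  have hn : (0 : ℝ) < n := Nat.cast_pos.mpr (Nat.zero_lt_of_lt hj)
  have card_le : (n : ℝ) ≤ (∑ i ∈ Finset.range n, |psi n j i|) * √2 :=
    (sum_sq_psi hj).symm.trans_le (sum_sq_le_sum_abs_mul fun i _ => abs_psi_le_sqrt_two n j i)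
  rw [l1psi, one_div_mul_eq_div, div_le_div_iff₀ (by positivity) hn, one_mul]
  exact card_le

/-- Each real DFT basis vector has normalized ℓ¹ norm at least `1/√2`; consequently
`β(n) ≥ 1/√2` for all `n ≥ 1`. -/
theorem l1psi_ge_inv_sqrt_two (n : ℕ) (hn : 1 ≤ n) :
    (∀ j < n, 1 / Real.sqrt 2 ≤ l1psi n j) ∧ 1 / Real.sqrt 2 ≤ beta n := by
  refine ⟨fun j hj => inv_sqrt_two_le_l1psi hj, le_csInf ⟨_, 0, hn, rfl⟩ ?_⟩
  rintro _ ⟨j, hj, rfl⟩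
  exact inv_sqrt_two_le_l1psi hj
end

section
/- As p tends to infinity over the primes, β(p) converges to 2√2/π. That is, for every ε > 0 there exists N such that for every prime p > N, |β(p) − 2√2/π| < ε. -/
/-!
For an odd prime `p` and `0 < j < p`, multiplication by `2j` permutes the residues modulo `p`.
Since `|sin|` is `π`-periodic, the normalized `ℓ¹` norm of `ψ_j` is therefore `√2/p` times a sum of
`|sin|` over `p` terms of an arithmetic progression of step `π/p`, starting at `0` for the sine
vectors and, because `π/2` is a half-integer multiple of `π/p`, at `π/(2p)` for the cosine vectors.
These sums telescope after multiplication by `sin (π/(2p))`: they equal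
`cot (π/(2p))` and `1 / sin (π/(2p))` respectively, and `x cot x < 1` shows that the constant vector
does not attain the minimum. Hence `β(p) = (√2/p) cot (π/(2p))`, and `x cot x → 1` as `x → 0`.
-/

open Filter Real Topology

theorem sum_range_comp_mul_add_of_periodic {M : Type*} [AddCommMonoid M] {g : ℕ → M} {n c : ℕ}
    (hg : Function.Periodic g n) (hc : n.Coprime c) (d : ℕ) :
    ∑ i ∈ Finset.range n, g (c * i + d) = ∑ i ∈ Finset.range n, g i := by
  have maps_to : Set.MapsTo (fun i ↦ (c * i + d) % n) (Finset.range n) (Finset.range n) :=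
    fun i hi ↦ Finset.mem_range.2 (Nat.mod_lt _ (Nat.zero_lt_of_lt (Finset.mem_range.1 hi)))
  have inj_on : Set.InjOn (fun i ↦ (c * i + d) % n) (Finset.range n) := by
    intro a ha b hb hab
    have modEq : a ≡ b [MOD n] :=
      Nat.ModEq.cancel_left_of_coprime hc (Nat.ModEq.add_right_cancel' d hab)
    exact modEq.eq_of_lt_of_lt (Finset.mem_range.1 ha) (Finset.mem_range.1 hb)
  exact Finset.sum_nbij _ maps_to inj_on
    (Finset.surjOn_of_injOn_of_card_le _ maps_to inj_on le_rfl)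
    fun i _ ↦ (hg.map_mod_nat _).symm

theorem sum_range_sin_mul_sin (a θ : ℝ) (n : ℕ) :
    (∑ i ∈ Finset.range n, sin (a + 2 * θ * i)) * sin θ =
      sin (a + (n - 1) * θ) * sin (n * θ) := by
  induction n with
  | zero => simp
  | succ n ih =>
    have sin_last : sin (a + 2 * θ * n) = sin ((a + n * θ) + n * θ) := by ring_nf
    have sin_prev : sin (a + (n - 1) * θ) = sin ((a + n * θ) - θ) := by ring_nf
    have sin_next : sin (a + ((n + 1 : ℕ) - 1) * θ) = sin (a + n * θ) := by push_cast; ring_nf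
    have sin_succ : sin ((n + 1 : ℕ) * θ) = sin (n * θ + θ) := by push_cast; ring_nf
    rw [Finset.sum_range_succ, add_mul, ih, sin_last, sin_prev, sin_next, sin_succ,
      sin_add (a + n * θ), sin_sub, sin_add (n * θ)]
    ring

theorem sin_pi_div_two_mul_pos {n : ℕ} (hn : n ≠ 0) : 0 < sin (π / (2 * n)) := by
  have one_le : (1 : ℝ) ≤ n := mod_cast Nat.one_le_iff_ne_zero.2 hn
  refine sin_pos_of_pos_of_lt_pi (by positivity) ?_
  exact div_lt_self pi_pos (by linarith)

theorem sum_range_abs_sin_add {n : ℕ} (hn : n ≠ 0) {a : ℝ} (ha : 0 ≤ a) (ha' : a ≤ π / n) :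
    ∑ i ∈ Finset.range n, |sin (a + π / n * i)| = cos (a - π / (2 * n)) / sin (π / (2 * n)) := by
  have abs_sin_eq : ∀ i ∈ Finset.range n,
      |sin (a + π / n * i)| = sin (a + 2 * (π / (2 * n)) * i) := by
    intro i hi
    have succ_le : (i : ℝ) + 1 ≤ n := mod_cast Finset.mem_range.1 hi
    have le_pi : a + π / n * i ≤ π := calc
      a + π / n * i ≤ π / n * (i + 1) := by linarith
      _ ≤ π / n * n := by gcongr
      _ = π := by field_simp
    rw [abs_of_nonneg (sin_nonneg_of_nonneg_of_le_pi (by positivity) le_pi)]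
    congr 2
    field_simp
  have half_pi : n * (π / (2 * n)) = π / 2 := by field_simp
  rw [Finset.sum_congr rfl abs_sin_eq, eq_div_iff (sin_pi_div_two_mul_pos hn).ne',
    sum_range_sin_mul_sin, sub_one_mul, half_pi, sin_pi_div_two, mul_one, ← sin_add_pi_div_two]
  ring_nf

theorem periodic_abs_sin_add_pi_div_mul {n : ℕ} (hn : n ≠ 0) (a : ℝ) :
    Function.Periodic (fun k : ℕ ↦ |sin (a + π / n * k)|) n := by
  intro k
  have shift : a + π / n * (k + n : ℕ) = a + π / n * k + π := by push_cast; field_simp; ring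
  simp only [shift, sin_add_pi, abs_neg]

theorem sum_range_abs_sin_add_of_coprime {n c : ℕ} (hn : n ≠ 0) (hc : n.Coprime c) (d : ℕ)
    {a : ℝ} (ha : 0 ≤ a) (ha' : a ≤ π / n) :
    ∑ i ∈ Finset.range n, |sin (a + π / n * (c * i + d : ℕ))| =
      cos (a - π / (2 * n)) / sin (π / (2 * n)) :=
  (sum_range_comp_mul_add_of_periodic (periodic_abs_sin_add_pi_div_mul hn a) hc d).trans
    (sum_range_abs_sin_add hn ha ha')

theorem sum_range_abs_sin_two_pi_div_mul {n j : ℕ} (hn : Odd n) (hj : n.Coprime j) :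
    ∑ i ∈ Finset.range n, |sin (2 * π / n * j * i)| = cot (π / (2 * n)) := by
  have hc : n.Coprime (2 * j) := (Nat.coprime_two_right.2 hn).mul_right hj
  have sum_eq := sum_range_abs_sin_add_of_coprime hn.pos.ne' hc 0 le_rfl (by positivity)
  rw [zero_sub, cos_neg, ← cot_eq_cos_div_sin] at sum_eq
  rw [← sum_eq]
  refine Finset.sum_congr rfl fun i _ ↦ ?_
  congr 2
  push_cast
  ring

theorem sum_range_abs_cos_two_pi_div_mul {n j : ℕ} (hn : Odd n) (hj : n.Coprime j) :
    ∑ i ∈ Finset.range n, |cos (2 * π / n * j * i)| = 1 / sin (π / (2 * n)) := by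
  have hc : n.Coprime (2 * j) := (Nat.coprime_two_right.2 hn).mul_right hj
  have n_ne_zero : n ≠ 0 := hn.pos.ne'
  obtain ⟨m, hm⟩ := hn
  have half_pi : π / 2 = π / (2 * n) + π / n * m := by
    have cast_eq : (n : ℝ) = 2 * m + 1 := mod_cast hm
    field_simp
    linarith
  have half_step_le : π / (2 * n) ≤ π / n := by
    gcongr
    linarith [n.cast_nonneg (α := ℝ)]
  have sum_eq :=
    sum_range_abs_sin_add_of_coprime n_ne_zero hc m (a := π / (2 * n)) (by positivity) half_step_le
  rw [sub_self, cos_zero] at sum_eq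
  rw [← sum_eq]
  refine Finset.sum_congr rfl fun i _ ↦ ?_
  rw [← sin_add_pi_div_two, half_pi]
  congr 2
  push_cast
  ring

theorem l1psi_of_half_lt {n j : ℕ} (hn : Odd n) (hj : n.Coprime j) (hlt : n / 2 < j) :
    l1psi n j = √2 / n * cot (π / (2 * n)) := by
  have psi_eq (i : ℕ) : psi n j i = √2 * sin (2 * π / n * j * i) := by
    rw [psi, if_neg (by omega), if_neg (by omega), if_neg (by omega)]
  simp only [l1psi, psi_eq, abs_mul, abs_of_nonneg (sqrt_nonneg 2), ← Finset.mul_sum,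
    sum_range_abs_sin_two_pi_div_mul hn hj]
  ring

theorem l1psi_of_le_half {n j : ℕ} (hn : Odd n) (hj : n.Coprime j) (hj₀ : j ≠ 0)
    (hle : j ≤ n / 2) :
    l1psi n j = √2 / n * (1 / sin (π / (2 * n))) := by
  have psi_eq (i : ℕ) : psi n j i = √2 * cos (2 * π / n * j * i) := by
    have n_mod_two : n % 2 = 1 := Nat.odd_iff.1 hn
    rw [psi, if_neg hj₀]
    split_ifs <;> first | rfl | omega
  simp only [l1psi, psi_eq, abs_mul, abs_of_nonneg (sqrt_nonneg 2), ← Finset.mul_sum,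
    sum_range_abs_cos_two_pi_div_mul hn hj]
  ring

theorem l1psi_zero {n : ℕ} (hn : n ≠ 0) : l1psi n 0 = 1 := by
  simp [l1psi, psi, hn]

theorem mul_cot_lt_one {x : ℝ} (hx : 0 < x) (hx' : x < π / 2) : x * cot x < 1 := by
  have tan_pos : 0 < tan x := tan_pos_of_pos_of_lt_pi_div_two hx hx'
  rw [← tan_inv_eq_cot, ← div_eq_mul_inv, div_lt_one tan_pos]
  exact lt_tan hx hx'

theorem tendsto_mul_cot_zero : Tendsto (fun x : ℝ ↦ x * cot x) (𝓝[≠] 0) (𝓝 1) := by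
  have tendsto_cos_div_sinc : Tendsto (fun x : ℝ ↦ cos x / sinc x) (𝓝 0) (𝓝 1) := by
    have tendsto_div := (continuous_cos.tendsto 0).div (continuous_sinc.tendsto 0) (by simp)
    rwa [cos_zero, sinc_zero, div_one] at tendsto_div
  refine (tendsto_cos_div_sinc.mono_left nhdsWithin_le_nhds).congr' ?_
  filter_upwards [self_mem_nhdsWithin] with x hx
  rw [sinc_of_ne_zero hx, cot_eq_cos_div_sin, div_div_eq_mul_div, mul_comm (cos x), mul_div_assoc]

theorem sqrt_two_div_mul_cot_eq (n : ℕ) :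
    √2 / n * cot (π / (2 * n)) = 2 * √2 / π * (π / (2 * n) * cot (π / (2 * n))) := by
  field_simp

theorem tendsto_sqrt_two_div_mul_cot :
    Tendsto (fun n : ℕ ↦ √2 / n * cot (π / (2 * n))) atTop (𝓝 (2 * √2 / π)) := by
  have tendsto_angle : Tendsto (fun n : ℕ ↦ π / (2 * (n : ℝ))) atTop (𝓝[≠] 0) := by
    refine tendsto_nhdsWithin_iff.2 ⟨?_, ?_⟩
    · exact (tendsto_natCast_atTop_atTop.const_mul_atTop two_pos).const_div_atTop π
    · filter_upwards [eventually_ne_atTop 0] with n hn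
      simp [pi_ne_zero, hn]
  simp only [sqrt_two_div_mul_cot_eq]
  simpa using (tendsto_mul_cot_zero.comp tendsto_angle).const_mul (2 * √2 / π)

theorem two_mul_sqrt_two_div_pi_lt_one : 2 * √2 / π < 1 := by
  rw [div_lt_one pi_pos]
  have sqrt_two_lt : √2 < 3 / 2 := (sqrt_lt' (by norm_num)).2 (by norm_num)
  linarith [pi_gt_three]

theorem sqrt_two_div_mul_cot_lt_one {n : ℕ} (hn : 2 ≤ n) : √2 / n * cot (π / (2 * n)) < 1 := by
  have one_lt : (1 : ℝ) < n := mod_cast hn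
  have angle_lt : π / (2 * n) < π / 2 := by
    gcongr
    linarith
  rw [sqrt_two_div_mul_cot_eq]
  calc 2 * √2 / π * (π / (2 * n) * cot (π / (2 * n)))
      ≤ 2 * √2 / π * 1 := by gcongr; exact (mul_cot_lt_one (by positivity) angle_lt).le
    _ < 1 := by rw [mul_one]; exact two_mul_sqrt_two_div_pi_lt_one

theorem beta_of_odd_prime {p : ℕ} (hp : p.Prime) (hodd : Odd p) :
    beta p = √2 / p * cot (π / (2 * p)) := by
  have two_le : 2 ≤ p := hp.two_le
  have coprime {j : ℕ} (hj₀ : j ≠ 0) (hj : j < p) : p.Coprime j :=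
    Nat.coprime_of_lt_prime hj₀ hj hp
  have half_lt : p / 2 < p - 1 := by have := Nat.odd_iff.1 hodd; omega
  refine IsLeast.csInf_eq ⟨⟨p - 1, by omega, ?_⟩, ?_⟩
  · exact (l1psi_of_half_lt hodd (coprime (by omega) (by omega)) half_lt).symm
  rintro _ ⟨j, hj, rfl⟩
  rcases eq_or_ne j 0 with rfl | hj₀
  · exact (sqrt_two_div_mul_cot_lt_one two_le).le.trans_eq (l1psi_zero hp.ne_zero).symm
  rcases le_or_gt j (p / 2) with hle | hlt
  · rw [l1psi_of_le_half hodd (coprime hj₀ hj) hj₀ hle, cot_eq_cos_div_sin]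
    have sin_pos := sin_pi_div_two_mul_pos hp.ne_zero
    gcongr
    exact cos_le_one _
  · exact (l1psi_of_half_lt hodd (coprime hj₀ hj) hlt).ge

/-- As `p → ∞` over the primes, `β(p) → 2√2/π`. -/
theorem beta_tendsto_over_primes :
    ∀ ε : ℝ, 0 < ε → ∃ N : ℕ, ∀ p : ℕ, p.Prime → N < p →
      |beta p - 2 * Real.sqrt 2 / Real.pi| < ε := by
  intro ε hε
  obtain ⟨N, hN⟩ := Metric.tendsto_atTop.1 tendsto_sqrt_two_div_mul_cot ε hε
  refine ⟨max N 2, fun p hp hlt ↦ ?_⟩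
  have hodd : Odd p := hp.odd_of_ne_two (by omega)
  rw [beta_of_odd_prime hp hodd, ← Real.dist_eq]
  exact hN p (by omega)
end

section
/- Let n ≥ 1 and let r ∈ [0, n]. For every x ∈ [0,1]^n with ∑_{i=1}^{n} x_i = r, one has ∑_{i=1}^{n} x_i² ≤ ⌊r⌋ + (r − ⌊r⌋)², and this bound is attained by some x ∈ [0,1]^n with ∑ x_i = r (namely, ⌊r⌋ coordinates equal to 1, one coordinate equal to r − ⌊r⌋, the rest 0). -/
/-!
Extend a convex `φ : [0, 1] → β` with `φ 0 = 0` to the whole line by `Φ (t + 1) = Φ t + φ 1`.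
Since `φ` is convex, `φ b + φ c ≤ φ a + φ d` whenever `b, c ∈ [a, d]` and `b + c = a + d`.
Applied to the fractional parts `b`, `c` of two numbers, with `a = 0` if `b + c < 1` and `d = 1`
otherwise, this makes `Φ` superadditive; hence `∑ φ (x i) ≤ Φ (∑ x i)` on the cube. Filling the
coordinates one after the other up to `1` attains the bound.
-/

open Set

theorem map_add_map_le_of_convexOn {𝕜 β : Type*} [Field 𝕜] [LinearOrder 𝕜] [IsStrictOrderedRing 𝕜]
    [AddCommGroup β] [PartialOrder β] [IsOrderedAddMonoid β] [Module 𝕜 β] {s : Set 𝕜} {φ : 𝕜 → β}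
    (hφ : ConvexOn 𝕜 s φ) {a b c d : 𝕜} (ha : a ∈ s) (hd : d ∈ s) (hb : b ∈ Icc a d)
    (h : b + c = a + d) : φ b + φ c ≤ φ a + φ d := by
  obtain ⟨u, v, hu, hv, huv, rfl⟩ : b ∈ segment 𝕜 a d := Icc_subset_segment hb
  obtain rfl : c = v • a + u • d := by
    simp only [smul_eq_mul] at h ⊢
    linear_combination h - (a + d) * huv
  calc φ (u • a + v • d) + φ (v • a + u • d)
      ≤ (u • φ a + v • φ d) + (v • φ a + u • φ d) :=
        add_le_add (hφ.2 ha hd hu hv huv) (hφ.2 ha hd hv hu (by rwa [add_comm]))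
    _ = (u + v) • (φ a + φ d) := by module
    _ = φ a + φ d := by rw [huv, one_smul]

/-- The extension `Φ` of `φ` from `[0, 1)` to the whole line by `Φ (t + 1) = Φ t + φ 1`. It agrees
with `φ` at `1` as well only if `φ 0 = 0`. -/
def quasiperiodicExt {R M : Type*} [Ring R] [LinearOrder R] [FloorRing R] [AddCommGroup M]
    (φ : R → M) (r : R) : M :=
  ⌊r⌋ • φ 1 + φ (Int.fract r)

/-- The sequence `1, …, 1, r - ⌊r⌋, 0, 0, …` with `⌊r⌋` leading ones, which for `0 ≤ r` fills the
total mass `r` greedily into coordinates of capacity `1`. -/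
def greedyFill {R : Type*} [Ring R] [LinearOrder R] [IsOrderedRing R] [FloorRing R]
    (r : R) (i : ℕ) : R :=
  if i < ⌊r⌋₊ then 1 else if i = ⌊r⌋₊ then Int.fract r else 0

section Ring

variable {R M : Type*} [Ring R] [LinearOrder R] [FloorRing R] [AddCommGroup M] {φ : R → M} {r : R}

theorem quasiperiodicExt_id (r : R) : quasiperiodicExt id r = r := by
  simp [quasiperiodicExt]

variable [IsStrictOrderedRing R]

theorem quasiperiodicExt_of_mem_Icc (hφ : φ 0 = 0) (hr : r ∈ Icc 0 1) :
    quasiperiodicExt φ r = φ r := by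
  obtain rfl | hr1 := hr.2.eq_or_lt
  · simp [quasiperiodicExt, hφ]
  · have hr' : r ∈ Ico 0 1 := ⟨hr.1, hr1⟩
    simp [quasiperiodicExt, Int.floor_eq_zero_iff.2 hr', Int.fract_eq_self.2 hr']

theorem greedyFill_mem_Icc (r : R) (i : ℕ) : greedyFill r i ∈ Icc 0 1 := by
  unfold greedyFill
  split_ifs
  · simp
  · exact ⟨Int.fract_nonneg r, (Int.fract_lt_one r).le⟩
  · simp

theorem greedyFill_eq_zero_of_le {i : ℕ} (hr : 0 ≤ r) (hi : r ≤ i) : greedyFill r i = 0 := by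
  have hfloor : ⌊r⌋₊ ≤ i := Nat.floor_le_of_le hi
  rw [greedyFill, if_neg hfloor.not_gt, ite_eq_right_iff]
  rintro rfl
  rw [← (Nat.floor_le hr).antisymm hi, Int.fract_natCast]

theorem sum_range_greedyFill {n : ℕ} (hφ : φ 0 = 0) (hr : r ∈ Icc 0 (n : R)) :
    ∑ i ∈ Finset.range n, φ (greedyFill r i) = quasiperiodicExt φ r := by
  have vanish_of_ge : ∀ i ≥ n, φ (greedyFill r i) = 0 := fun i hi ↦ by
    rw [greedyFill_eq_zero_of_le hr.1 (hr.2.trans (Nat.cast_le.2 hi)), hφ]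
  have vanish_of_gt_floor : ∀ i ≥ ⌊r⌋₊ + 1, φ (greedyFill r i) = 0 := fun i hi ↦ by
    rw [greedyFill_eq_zero_of_le hr.1 (Nat.lt_of_floor_lt hi).le, hφ]
  have ones : ∀ i ∈ Finset.range ⌊r⌋₊, φ (greedyFill r i) = φ 1 := fun i hi ↦ by
    rw [greedyFill, if_pos (Finset.mem_range.1 hi)]
  calc ∑ i ∈ Finset.range n, φ (greedyFill r i)
      = ∑ i ∈ Finset.range (n + 1), φ (greedyFill r i) :=
        (Finset.eventually_constant_sum vanish_of_ge n.le_succ).symm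
    _ = ∑ i ∈ Finset.range (⌊r⌋₊ + 1), φ (greedyFill r i) :=
        Finset.eventually_constant_sum vanish_of_gt_floor
          (Nat.succ_le_succ (Nat.floor_le_of_le hr.2))
    _ = ⌊r⌋₊ • φ 1 + φ (Int.fract r) := by
        rw [Finset.sum_range_succ, Finset.sum_congr rfl ones]
        simp [greedyFill]
    _ = quasiperiodicExt φ r := by
        rw [quasiperiodicExt, ← Int.natCast_floor_eq_floor hr.1, natCast_zsmul]

theorem sum_greedyFill {ι : Type*} [Fintype ι] {n : ℕ} (e : ι ≃ Fin n) (hφ : φ 0 = 0)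
    (hr : r ∈ Icc 0 (n : R)) : ∑ i, φ (greedyFill r (e i)) = quasiperiodicExt φ r := by
  rw [e.sum_comp fun j ↦ φ (greedyFill r j),
    Fin.sum_univ_eq_sum_range fun j ↦ φ (greedyFill r j), sum_range_greedyFill hφ hr]

end Ring

section Convex

variable {𝕜 β ι : Type*} [Field 𝕜] [LinearOrder 𝕜] [IsStrictOrderedRing 𝕜] [FloorRing 𝕜]
  [AddCommGroup β] [PartialOrder β] [IsOrderedAddMonoid β] [Module 𝕜 β] {φ : 𝕜 → β}

theorem quasiperiodicExt_superadditive (hφ : ConvexOn 𝕜 (Icc 0 1) φ) (hφ0 : φ 0 ≤ 0) (a b : 𝕜) :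
    quasiperiodicExt φ a + quasiperiodicExt φ b ≤ quasiperiodicExt φ (a + b) := by
  have fract_mem (t : 𝕜) : Int.fract t ∈ Icc 0 1 :=
    ⟨Int.fract_nonneg t, (Int.fract_lt_one t).le⟩
  have floor_cases : ⌊a + b⌋ = ⌊a⌋ + ⌊b⌋ ∨ ⌊a + b⌋ = ⌊a⌋ + ⌊b⌋ + 1 := by
    have := Int.le_floor_add a b
    have := Int.le_floor_add_floor a b
    lia
  have regroup : quasiperiodicExt φ a + quasiperiodicExt φ b =
      (⌊a⌋ + ⌊b⌋) • φ 1 + (φ (Int.fract a) + φ (Int.fract b)) := by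
    simp only [quasiperiodicExt]
    module
  rw [regroup, quasiperiodicExt]
  rcases floor_cases with no_carry | carry
  · have fract_sum : Int.fract a + Int.fract b = 0 + Int.fract (a + b) := by
      simp only [Int.fract, no_carry, Int.cast_add]
      ring
    have fract_le : Int.fract a ≤ Int.fract (a + b) := by linarith [Int.fract_nonneg b]
    rw [no_carry]
    gcongr
    calc φ (Int.fract a) + φ (Int.fract b)
        ≤ φ 0 + φ (Int.fract (a + b)) :=
          map_add_map_le_of_convexOn hφ (by simp) (fract_mem _)
            ⟨Int.fract_nonneg a, fract_le⟩ fract_sum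
      _ ≤ φ (Int.fract (a + b)) := add_le_of_nonpos_left hφ0
  · have fract_sum : Int.fract a + Int.fract b = Int.fract (a + b) + 1 := by
      simp only [Int.fract, carry, Int.cast_add, Int.cast_one]
      ring
    have le_fract : Int.fract (a + b) ≤ Int.fract a := by linarith [Int.fract_lt_one b]
    rw [carry, add_smul _ 1, one_smul, add_assoc, add_comm (φ 1)]
    exact add_le_add_right (map_add_map_le_of_convexOn hφ (fract_mem _) (by simp)
      ⟨le_fract, (Int.fract_lt_one a).le⟩ fract_sum) _

theorem sum_map_le_quasiperiodicExt_sum (hφ : ConvexOn 𝕜 (Icc 0 1) φ) (hφ0 : φ 0 = 0)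
    {s : Finset ι} {x : ι → 𝕜} (hx : ∀ i ∈ s, x i ∈ Icc 0 1) :
    ∑ i ∈ s, φ (x i) ≤ quasiperiodicExt φ (∑ i ∈ s, x i) := by
  have ext_zero : quasiperiodicExt φ 0 = 0 := by
    rw [quasiperiodicExt_of_mem_Icc hφ0 (by simp), hφ0]
  calc ∑ i ∈ s, φ (x i)
      = ∑ i ∈ s, quasiperiodicExt φ (x i) :=
        Finset.sum_congr rfl fun i hi ↦ (quasiperiodicExt_of_mem_Icc hφ0 (hx i hi)).symm
    _ ≤ quasiperiodicExt φ (∑ i ∈ s, x i) :=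
        Finset.le_sum_of_subadditive (N := βᵒᵈ) (quasiperiodicExt φ) ext_zero.ge
          (quasiperiodicExt_superadditive (β := β) hφ hφ0.le) s x

theorem sum_sq_max_on_cube_slice_general [Fintype ι] (hφ : ConvexOn 𝕜 (Icc 0 1) φ) (hφ0 : φ 0 = 0)
    {r : 𝕜} (hr : r ∈ Icc 0 (Fintype.card ι : 𝕜)) :
    (∀ x : ι → 𝕜, (∀ i, x i ∈ Icc 0 1) → ∑ i, x i = r →
        ∑ i, φ (x i) ≤ ⌊r⌋ • φ 1 + φ (r - ⌊r⌋)) ∧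
      (∃ x : ι → 𝕜, (∀ i, x i ∈ Icc 0 1) ∧ ∑ i, x i = r ∧
        ∑ i, φ (x i) = ⌊r⌋ • φ 1 + φ (r - ⌊r⌋)) := by
  constructor
  · rintro x hx rfl
    exact sum_map_le_quasiperiodicExt_sum hφ hφ0 fun i _ ↦ hx i
  · let e := Fintype.equivFin ι
    have total : ∑ i, greedyFill r (e i) = r :=
      (sum_greedyFill (φ := id) e rfl hr).trans (quasiperiodicExt_id r)
    exact ⟨fun i ↦ greedyFill r (e i), fun i ↦ greedyFill_mem_Icc r (e i), total,
      sum_greedyFill e hφ0 hr⟩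

end Convex

/-- The maximum of `∑ x_i²` over `x ∈ [0,1]^n` with `∑ x_i = r` is
`⌊r⌋ + (r - ⌊r⌋)²`, and this bound is attained. -/
theorem sum_sq_max_on_cube_slice (n : ℕ) (hn : 1 ≤ n) (r : ℝ)
    (hr : r ∈ Set.Icc (0 : ℝ) (n : ℝ)) :
    (∀ x : Fin n → ℝ, (∀ i, x i ∈ Set.Icc (0 : ℝ) 1) → ∑ i, x i = r →
        ∑ i, x i ^ 2 ≤ (⌊r⌋ : ℝ) + (r - (⌊r⌋ : ℝ)) ^ 2) ∧
      (∃ x : Fin n → ℝ, (∀ i, x i ∈ Set.Icc (0 : ℝ) 1) ∧ ∑ i, x i = r ∧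
        ∑ i, x i ^ 2 = (⌊r⌋ : ℝ) + (r - (⌊r⌋ : ℝ)) ^ 2) := by
  have sq_convex : ConvexOn ℝ (Icc 0 1) fun t : ℝ ↦ t ^ 2 :=
    even_two.convexOn_pow.subset (subset_univ _) (convex_Icc 0 1)
  simpa using sum_sq_max_on_cube_slice_general (ι := Fin n) sq_convex (by simp) (by simpa using hr)
end

section
/- (Waterfilling optimality for the LMMSE objective.) Let m ≥ 1, let c_1,…,c_m > 0, let γ > 0 and P ≥ 0. Suppose T ≥ 0 satisfies ∑_{i=1}^{m} max(T − c_i, 0) = γP, and set P*_i = (1/γ)·max(T − c_i, 0). Then for every q ∈ ℝ^m with q_i ≥ 0 for all i and ∑_{i=1}^{m} q_i ≤ P, one has ∑_{i=1}^{m} 1/(c_i + γ q_i) ≥ ∑_{i=1}^{m} 1/(c_i + γ P*_i). -/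
/-!
In the variables `x i = c i + γ * q i`, the waterfilling allocation is `max T (c i)`, and its
competitors are the `x ≥ c` with no larger sum. The right derivative `D` of a convex antitone `f` at
the water level `T` is a nonpositive Lagrange multiplier. If `c i ≤ T`, the line of slope `D` at `T`
supports `f`. If `T < c i`, then `x i` can only lie to the right of `c i`, where `f` has slope at
least `D`. Either way `f (max T (c i)) + D * (x i - max T (c i)) ≤ f (x i)`, and summing over `i`
proves optimality. The LMMSE objective is the case `f x = 1 / x`.
-/

open Set

section RightDeriv

variable {S : Set ℝ} {f : ℝ → ℝ}

theorem add_rightDeriv_mul_sub_le_of_convexOn (hf : ConvexOn ℝ S f) {x y : ℝ}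
    (hx : x ∈ interior S) (hy : y ∈ S) :
    f x + derivWithin f (Ioi x) x * (y - x) ≤ f y := by
  rcases lt_trichotomy x y with hxy | rfl | hyx
  · have hslope := hf.rightDeriv_le_slope_of_mem_interior hx hy hxy
    rw [slope_def_field, le_div_iff₀ (sub_pos.2 hxy)] at hslope
    linarith
  · simp
  · have hslope : slope f y x ≤ derivWithin f (Ioi x) x :=
      (hf.slope_le_leftDeriv_of_mem_interior hy hx hyx).trans
        (hf.leftDeriv_le_rightDeriv_of_mem_interior hx)
    rw [slope_def_field, div_le_iff₀ (sub_pos.2 hyx)] at hslope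
    linarith

theorem add_rightDeriv_mul_sub_max_le_of_convexOn (hf : ConvexOn ℝ S f) {T c x : ℝ}
    (hT : T ∈ interior S) (hc : c ∈ interior S) (hx : x ∈ S) (hcx : c ≤ x) :
    f (max T c) + derivWithin f (Ioi T) T * (x - max T c) ≤ f x := by
  rcases le_total c T with hcT | hTc
  · rw [max_eq_left hcT]
    exact add_rightDeriv_mul_sub_le_of_convexOn hf hT hx
  · rw [max_eq_right hTc]
    calc f c + derivWithin f (Ioi T) T * (x - c)
        ≤ f c + derivWithin f (Ioi c) c * (x - c) := by
          gcongr
          exact hf.monotoneOn_rightDeriv hT hc hTc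
      _ ≤ f x := add_rightDeriv_mul_sub_le_of_convexOn hf hc hx

end RightDeriv

section Waterfilling

variable {ι : Type*} {s : Finset ι} {f : ℝ → ℝ} {a T : ℝ} {c : ι → ℝ}

theorem sum_comp_max_le_sum_comp_of_lt (hf : ConvexOn ℝ (Ioi a) f)
    (hanti : AntitoneOn f (Ioi a)) (hT : a < T) (hc : ∀ i ∈ s, a < c i) {x : ι → ℝ}
    (hcx : ∀ i ∈ s, c i ≤ x i) (hsum : ∑ i ∈ s, x i ≤ ∑ i ∈ s, max T (c i)) :
    ∑ i ∈ s, f (max T (c i)) ≤ ∑ i ∈ s, f (x i) := by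
  set D := derivWithin f (Ioi T) T
  have hD : D ≤ 0 := (hanti.mono (Ioi_subset_Ioi hT.le)).derivWithin_nonpos
  have hbudget : 0 ≤ D * ∑ i ∈ s, (x i - max T (c i)) := by
    rw [Finset.sum_sub_distrib]
    exact mul_nonneg_of_nonpos_of_nonpos hD (sub_nonpos.2 hsum)
  calc ∑ i ∈ s, f (max T (c i))
      ≤ ∑ i ∈ s, f (max T (c i)) + D * ∑ i ∈ s, (x i - max T (c i)) :=
        le_add_of_nonneg_right hbudget
    _ = ∑ i ∈ s, (f (max T (c i)) + D * (x i - max T (c i))) := by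
        rw [Finset.sum_add_distrib, Finset.mul_sum]
    _ ≤ ∑ i ∈ s, f (x i) := by
        refine Finset.sum_le_sum fun i hi ↦ ?_
        apply add_rightDeriv_mul_sub_max_le_of_convexOn hf _ _ _ (hcx i hi)
        · rwa [interior_Ioi]
        · rw [interior_Ioi]
          exact hc i hi
        · exact (hc i hi).trans_le (hcx i hi)

theorem sum_comp_max_le_sum_comp (hf : ConvexOn ℝ (Ioi a) f)
    (hanti : AntitoneOn f (Ioi a)) (hc : ∀ i ∈ s, a < c i) {x : ι → ℝ}
    (hcx : ∀ i ∈ s, c i ≤ x i) (hsum : ∑ i ∈ s, x i ≤ ∑ i ∈ s, max T (c i)) :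
    ∑ i ∈ s, f (max T (c i)) ≤ ∑ i ∈ s, f (x i) := by
  rcases lt_or_ge a T with hT | hT
  · exact sum_comp_max_le_sum_comp_of_lt hf hanti hT hc hcx hsum
  · have hmax : ∀ i ∈ s, max T (c i) = c i := fun i hi ↦ max_eq_right (hT.trans (hc i hi).le)
    rw [Finset.sum_congr rfl hmax] at hsum
    have hx : ∀ i ∈ s, c i = x i :=
      (Finset.sum_eq_sum_iff_of_le hcx).1 (hsum.antisymm' (Finset.sum_le_sum hcx))
    exact (Finset.sum_congr rfl fun i hi ↦ by rw [hmax i hi, hx i hi]).le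

theorem waterfilling_optimal_general (hf : ConvexOn ℝ (Ioi a) f) (hanti : AntitoneOn f (Ioi a))
    (hc : ∀ i ∈ s, a < c i) {γ P : ℝ} (hγ : 0 < γ)
    (hwf : ∑ i ∈ s, max (T - c i) 0 = γ * P)
    {Pstar : ι → ℝ} (hPstar : ∀ i ∈ s, Pstar i = (1 / γ) * max (T - c i) 0)
    {q : ι → ℝ} (hq : ∀ i ∈ s, 0 ≤ q i) (hqP : ∑ i ∈ s, q i ≤ P) :
    ∑ i ∈ s, f (c i + γ * Pstar i) ≤ ∑ i ∈ s, f (c i + γ * q i) := by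
  have hlevel (i : ι) : c i + max (T - c i) 0 = max T (c i) := by
    rw [← max_add_add_left, add_sub_cancel, add_zero]
  have hstar : ∀ i ∈ s, c i + γ * Pstar i = max T (c i) := fun i hi ↦ by
    rw [hPstar i hi, ← mul_assoc, mul_one_div_cancel hγ.ne', one_mul, hlevel]
  rw [Finset.sum_congr rfl fun i hi ↦ congrArg f (hstar i hi)]
  refine sum_comp_max_le_sum_comp hf hanti hc
    (fun i hi ↦ le_add_of_nonneg_right (mul_nonneg hγ.le (hq i hi))) ?_
  calc ∑ i ∈ s, (c i + γ * q i)
      = ∑ i ∈ s, c i + γ * ∑ i ∈ s, q i := by rw [Finset.sum_add_distrib, Finset.mul_sum]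
    _ ≤ ∑ i ∈ s, c i + γ * P := by gcongr
    _ = ∑ i ∈ s, max T (c i) := by simp only [← hwf, ← Finset.sum_add_distrib, hlevel]

end Waterfilling

section OneDiv

variable {𝕜 : Type*} [Field 𝕜] [LinearOrder 𝕜] [IsStrictOrderedRing 𝕜]

theorem convexOn_one_div_Ioi : ConvexOn 𝕜 (Ioi 0) fun x : 𝕜 ↦ 1 / x := by
  simpa only [zpow_neg_one, one_div] using convexOn_zpow (𝕜 := 𝕜) (-1)

theorem antitoneOn_one_div_Ioi : AntitoneOn (fun x : 𝕜 ↦ 1 / x) (Ioi 0) :=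
  fun _ hx _ _ hxy ↦ one_div_le_one_div_of_le hx hxy

end OneDiv

/-- Waterfilling optimality for the LMMSE objective: the waterfilling allocation
`P*_i = (1/γ) max(T - c_i, 0)` at water level `T` minimizes `∑ 1/(c_i + γ q_i)`
over all nonnegative allocations `q` of total power at most `P`. -/
theorem waterfilling_optimal (m : ℕ) (hm : 1 ≤ m) (c : Fin m → ℝ) (hc : ∀ i, 0 < c i)
    (γ P T : ℝ) (hγ : 0 < γ) (hP : 0 ≤ P) (hT : 0 ≤ T)
    (hwf : ∑ i, max (T - c i) 0 = γ * P)
    (Pstar : Fin m → ℝ) (hPstar : ∀ i, Pstar i = (1 / γ) * max (T - c i) 0)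
    (q : Fin m → ℝ) (hq : ∀ i, 0 ≤ q i) (hqP : ∑ i, q i ≤ P) :
    ∑ i, 1 / (c i + γ * Pstar i) ≤ ∑ i, 1 / (c i + γ * q i) :=
  waterfilling_optimal_general convexOn_one_div_Ioi antitoneOn_one_div_Ioi (fun i _ ↦ hc i) hγ hwf
    (fun i _ ↦ hPstar i) (fun i _ ↦ hq i) hqP
end
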